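/- For every prime p, every integer N ≥ 2, and every β ∈ ℂ with Re(β) > −2/N, the integral Z_N(ℙ¹(ℚ_p), β) converges absolutely and Z_N(ℙ¹(ℚ_p), β) = N! · Σ_{k=0}^{N} [cosh((log p / 2)·(N + (N(N−1)/2)β)·(1 − 2k/N)) / (2·cosh(log p / 2))^N] · F_{N−k}(log p, β) · F_k(log p, β). -/

import Mathlib

open MeasureTheory
open scoped LinearAlgebra.Projectivization

namespace LogCoulomb

noncomputable section

/-! ### The projective line over `ℚ_p`, its spherical metric and `PGL₂`-invariant measure -/

variable (p : ℕ) [Fact p.Prime]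

instance : MeasurableSpace ℚ_[p] := borel _
instance : BorelSpace ℚ_[p] := ⟨rfl⟩

/-- The projective line over `ℚ_p`. -/
abbrev P1 := ℙ ℚ_[p] (Fin 2 → ℚ_[p])

instance : TopologicalSpace (P1 p) :=
  inferInstanceAs (TopologicalSpace (Quotient _))

instance : MeasurableSpace (P1 p) := borel _
instance : BorelSpace (P1 p) := ⟨rfl⟩

/-- Spherical distance on homogeneous coordinates:
`δ((x₀,x₁),(y₀,y₁)) = |x₀y₁ - x₁y₀| / (max(|x₀|,|x₁|) ⬝ max(|y₀|,|y₁|))`. -/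
def sdelta (x y : Fin 2 → ℚ_[p]) : ℝ :=
  ‖x 0 * y 1 - x 1 * y 0‖ / (max ‖x 0‖ ‖x 1‖ * max ‖y 0‖ ‖y 1‖)

/-- The spherical metric on `ℙ¹(ℚ_p)`, defined via the canonical representatives. -/
def pdelta (ξ η : P1 p) : ℝ := sdelta p ξ.rep η.rep

open Classical in
/-- The action of a matrix on `ℙ¹(ℚ_p)`: `[x₀:x₁] ↦ [a x₀ + b x₁ : c x₀ + d x₁]`
(well-defined, and given by the first branch of the `if`, whenever `A` is invertible). -/
def mobius (A : Matrix (Fin 2) (Fin 2) ℚ_[p]) (ξ : P1 p) : P1 p :=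
  if h : A.mulVec ξ.rep ≠ 0 then Projectivization.mk ℚ_[p] (A.mulVec ξ.rep) h else ξ

/-- `ν` is invariant under the action of `GL₂(ℤ_p)` on `ℙ¹(ℚ_p)`; membership of the matrix
entries in `ℤ_p`, and invertibility of the matrix over `ℤ_p`, are phrased via the `p`-adic
norm on `ℚ_p`. -/
def IsGLInvariant (ν : Measure (P1 p)) : Prop :=
  ∀ A : Matrix (Fin 2) (Fin 2) ℚ_[p],
    (∀ i j, ‖A i j‖ ≤ 1) → ‖A.det‖ = 1 →
      ∀ M : Set (P1 p), MeasurableSet M → ν (mobius p A '' M) = ν M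

/-- The embedding `ι : ℚ_p → ℙ¹(ℚ_p)`, `x ↦ [x : 1]`. -/
def iota (x : ℚ_[p]) : P1 p :=
  Projectivization.mk ℚ_[p] ![x, 1] (by
    intro h
    have h1 := congrFun h 1
    simp at h1)

/-! ### Canonical partition functions -/

/-- The pairs `(i,j)` with `i < j`. -/
def pairs (N : ℕ) : Finset (Fin N × Fin N) := Finset.univ.filter fun q => q.1 < q.2

/-- The closed unit ball `ℤ_p = R` inside `ℚ_p`. -/
def Zball : Set ℚ_[p] := {x | ‖x‖ ≤ 1}

/-- The open unit ball `pℤ_p = P` inside `ℚ_p`. -/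
def Pball : Set ℚ_[p] := {x | ‖x‖ < 1}

/-- The one-component canonical partition function
`Z_N(X, β) = ∫_{X^N} ∏_{i<j} |x_i - x_j|^β dμ^N` (as a Bochner integral, whether or not it
converges absolutely). -/
def ZN (μ : Measure ℚ_[p]) [SigmaFinite μ] (X : Set ℚ_[p]) (N : ℕ) (β : ℂ) : ℂ :=
  ∫ x : Fin N → ℚ_[p], ∏ q ∈ pairs N, (‖x q.1 - x q.2‖ : ℂ) ^ β
    ∂(Measure.pi fun _ => μ.restrict X)

/-- The multivariate canonical partition function
`𝒵_I(X, s) = ∫_{X^I} ∏_{i<j, i,j ∈ I} |x_i - x_j|^{s_{ij}} dμ^I` for a subset `I ⊆ [N]`. -/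
def ZI (μ : Measure ℚ_[p]) [SigmaFinite μ] (X : Set ℚ_[p]) {N : ℕ} (I : Finset (Fin N))
    (s : Fin N → Fin N → ℂ) : ℂ :=
  ∫ x : I → ℚ_[p],
    ∏ q ∈ Finset.univ.filter (fun q : (↥I) × (↥I) => (q.1 : Fin N) < (q.2 : Fin N)),
      (‖x q.1 - x q.2‖ : ℂ) ^ s q.1.1 q.2.1
    ∂(Measure.pi fun _ => μ.restrict X)

/-- The multivariate canonical partition function
`𝒵_N(ℙ¹(ℚ_p), s) = ∫_{(ℙ¹(ℚ_p))^N} ∏_{i<j} δ(ξ_i,ξ_j)^{s_{ij}} dν^N`. -/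
def ZP1s (ν : Measure (P1 p)) [SigmaFinite ν] (N : ℕ) (s : Fin N → Fin N → ℂ) : ℂ :=
  ∫ x : Fin N → P1 p, ∏ q ∈ pairs N, ((pdelta p (x q.1) (x q.2) : ℝ) : ℂ) ^ s q.1 q.2
    ∂(Measure.pi fun _ => ν)

/-- The one-component canonical partition function `Z_N(ℙ¹(ℚ_p), β)`. -/
def ZP1 (ν : Measure (P1 p)) [SigmaFinite ν] (N : ℕ) (β : ℂ) : ℂ :=
  ∫ x : Fin N → P1 p, ∏ q ∈ pairs N, ((pdelta p (x q.1) (x q.2) : ℝ) : ℂ) ^ β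
    ∂(Measure.pi fun _ => ν)

/-! ### The quadratic recurrence -/

/-- The factor `ρ_{N,k}(t,β)` appearing in the quadratic recurrence; here
`N.choose 2 = N(N-1)/2`. -/
def rho (N k : ℕ) (t : ℝ) (β : ℂ) : ℂ :=
  if t = 0 then
    (((N : ℂ) + (N.choose 2 : ℂ) * β) * (1 - 2 * (k : ℂ) / (N : ℂ)) + 1) /
      (((N : ℂ) + (N.choose 2 : ℂ) * β) - 1)
  else
    Complex.sinh (((t : ℂ) / 2) * (((N : ℂ) + (N.choose 2 : ℂ) * β) * (1 - 2 * (k : ℂ) / (N : ℂ)) + 1)) /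
      Complex.sinh (((t : ℂ) / 2) * (((N : ℂ) + (N.choose 2 : ℂ) * β) - 1))

/-- The quadratic recurrence: `F 0 = F 1 = 1` and
`F N t β = ∑_{k=1}^{N-1} (k/N) ρ_{N,k}(t,β) F_{N-k}(t,β) F_k(t,β)` for `N ≥ 2`. -/
def F : ℕ → ℝ → ℂ → ℂ
  | 0, _, _ => 1
  | 1, _, _ => 1
  | N + 2, t, β =>
    ∑ k ∈ (Finset.Icc 1 (N + 1)).attach,
      (((k : ℕ) : ℂ) / ((N : ℂ) + 2)) * rho (N + 2) k t β *
        F (N + 2 - (k : ℕ)) t β * F (k : ℕ) t β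
  decreasing_by
  all_goals
    have hk := Finset.mem_Icc.mp k.2
    omega

/-! ### Splitting chains -/

/-- A splitting chain `Λ_0 > Λ_1 > ⋯ > Λ_L` of set partitions of the subset `I ⊆ [N]`,
beginning with the trivial partition `{I}` and ending with the partition of `I` into
singletons.  (The values `Λ ℓ` for `ℓ > L` are required to be `∅`, so that a chain is
determined by the genuine data `Λ_0, …, Λ_L`.) -/
structure SplChain (N : ℕ) (I : Finset (Fin N)) where
  L : ℕ
  Λ : ℕ → Finset (Finset (Fin N))
  nonempty_mem : ∀ ℓ ≤ L, ∀ B ∈ Λ ℓ, B.Nonempty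
  subset_mem : ∀ ℓ ≤ L, ∀ B ∈ Λ ℓ, B ⊆ I
  cover : ∀ ℓ ≤ L, ∀ i ∈ I, ∃! B, B ∈ Λ ℓ ∧ i ∈ B
  first : Λ 0 = {I}
  last : Λ L = I.image fun i => {i}
  refines : ∀ ℓ < L, ∀ B ∈ Λ (ℓ + 1), ∃ C ∈ Λ ℓ, B ⊆ C
  strict : ∀ ℓ < L, Λ (ℓ + 1) ≠ Λ ℓ
  trailing : ∀ ℓ, L < ℓ → Λ ℓ = ∅

variable {N : ℕ} {I : Finset (Fin N)}

/-- The branches of a splitting chain: the non-singleton parts,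
`ℬ(𝔖) = (Λ_0 ∪ ⋯ ∪ Λ_{L-1}) \ Λ_L`. -/
def SplChain.branches (S : SplChain N I) : Finset (Finset (Fin N)) :=
  ((Finset.range S.L).biUnion S.Λ) \ S.Λ S.L

/-- The depth `ℓ_𝔖(λ) = max {ℓ : λ ∈ Λ_ℓ}` of a branch. -/
def SplChain.depth (S : SplChain N I) (lam : Finset (Fin N)) : ℕ :=
  ((Finset.range (S.L + 1)).filter fun ℓ => lam ∈ S.Λ ℓ).sup id

/-- The degree `deg_𝔖(λ) = #{λ' ∈ Λ_{ℓ_𝔖(λ)+1} : λ' ⊆ λ}` of a branch. -/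
def SplChain.degree (S : SplChain N I) (lam : Finset (Fin N)) : ℕ :=
  ((S.Λ (S.depth lam + 1)).filter fun lam' => lam' ⊆ lam).card

/-- A splitting chain is reduced if every branch appears in exactly one partition of the
chain (namely the one at its depth). -/
def SplChain.Reduced (S : SplChain N I) : Prop :=
  ∀ lam ∈ S.branches, ∀ ℓ ≤ S.L, (lam ∈ S.Λ ℓ ↔ ℓ = S.depth lam)

/-- `e_λ(s) = #λ - 1 + ∑_{i<j, i,j ∈ λ} s_{ij}`. -/
def eexp (lam : Finset (Fin N)) (s : Fin N → Fin N → ℂ) : ℂ :=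
  (lam.card : ℂ) - 1 + ∑ q ∈ (pairs N).filter fun q => q.1 ∈ lam ∧ q.2 ∈ lam, s q.1 q.2

/-- Membership in `Ω_I`: `Re e_λ(s) > 0` for every `λ ⊆ I` with `#λ > 1`. -/
def InOmega (I : Finset (Fin N)) (s : Fin N → Fin N → ℂ) : Prop :=
  ∀ lam ⊆ I, 1 < lam.card → 0 < (eexp lam s).re


/-- The multivariate canonical partition function `𝒵_N(ℤ_p, s)` over `Fin N`-indexed tuples. -/
def ZNs (μ : Measure ℚ_[p]) [SigmaFinite μ] (X : Set ℚ_[p]) (N : ℕ)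
    (s : Fin N → Fin N → ℂ) : ℂ :=
  ∫ x : Fin N → ℚ_[p], ∏ q ∈ pairs N, (‖x q.1 - x q.2‖ : ℂ) ^ s q.1 q.2
    ∂(Measure.pi fun _ => μ.restrict X)

/-- The ball `p^v ℤ_p = {x : |x| ≤ p^{-v}}` in `ℚ_p`. -/
def pvball (v : ℤ) : Set ℚ_[p] := {x | ‖x‖ ≤ (p : ℝ) ^ (-v)}

/-- `G_N(q,β) = N! q^{(1/2)(N choose 2)β} F_N(log q, β)`. -/
def GN (N : ℕ) (β : ℂ) (q : ℝ) : ℂ :=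
  (N.factorial : ℂ) * (q : ℂ) ^ ((N.choose 2 : ℂ) * β / 2) * F N (Real.log q) β

/-- `H_N(q,β)`, the efficient formula for `Z_N(ℙ¹(K),β)` as a function of `q`. -/
def HN (N : ℕ) (β : ℂ) (q : ℝ) : ℂ :=
  (N.factorial : ℂ) * ∑ k ∈ Finset.range (N + 1),
    Complex.cosh (((Real.log q : ℂ) / 2) * ((N : ℂ) + (N.choose 2 : ℂ) * β) *
          (1 - 2 * (k : ℂ) / (N : ℂ))) /
        (2 * Complex.cosh ((Real.log q : ℂ) / 2)) ^ N *
      F (N - k) (Real.log q) β * F k (Real.log q) β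

end

/-!
Assemble the canonical partition functions into the grand canonical series `∑ Z_n tⁿ / n!`. If two
sources do not interact, that is, particles drawn from different sources have pair weight `1`,
the series of their sum is the product of their series, since a configuration is a choice of which
particles come from the first source. The integers `ℤ_p` are the disjoint union of `p` copies of
themselves, the residue classes, contracted by `p⁻¹` and at mutual distance `1`. Hence the series
`Z` of `ℤ_p` satisfies `Z = C ^ p`, where `C` is the series of one class, obtained from `Z` by
rescaling its coefficients. Taking logarithmic derivatives, clearing denominators and comparing
coefficients gives the quadratic recurrence for the numbers `F`; each `sinh` is the difference
between the two sides for one splitting of the `n` particles into `k` and `n - k`.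

The same decomposition yields integrability: for the weight cut off at size `R`, it bounds the
`n`-particle mass by `r` times itself plus a constant independent of `R`, and `r < 1` is exactly
the condition on `Re β`.

Finally, `ℙ¹(ℚ_p)` is the union of a copy of `ℤ_p` and a copy of its maximal ideal around `∞`, at
mutual distance `1` and of masses `p / (p + 1)` and `1 / (p + 1)`. Its series is thus a rescaling
of `Z C`, and symmetrising the product in `k ↔ n - k` produces the `cosh`.
-/

/-! ### Products over pairs -/

section PairProduct

variable {X Y ι κ M : Type*} [Fintype ι] [LinearOrder ι] [CommMonoid M]

/-- The Boltzmann factor `∏_{i < j} w (x i) (x j)` of a configuration `x` of particles with pair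
weight `w`. The order on the index type only matters when `w` is not symmetric. -/
def pairProd (w : X → X → M) (x : ι → X) : M :=
  ∏ q : ι × ι with q.1 < q.2, w (x q.1) (x q.2)

lemma pairProd_comp (w : Y → Y → M) (f : X → Y) (x : ι → X) :
    pairProd w (f ∘ x) = pairProd (fun a b => w (f a) (f b)) x := rfl

lemma pairProd_comp_orderIso [Fintype κ] [LinearOrder κ] (w : X → X → M) (e : ι ≃o κ)
    (x : κ → X) : pairProd w (x ∘ e) = pairProd w x :=
  Finset.prod_equiv (e.toEquiv.prodCongr e.toEquiv) (by simp) (by simp)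

lemma pairProd_const_mul (c : M) (w : X → X → M) (x : ι → X) :
    pairProd (fun a b => c * w a b) x = c ^ (Fintype.card ι).choose 2 * pairProd w x := by
  rw [pairProd, Finset.prod_mul_distrib, Finset.prod_const, Fintype.card_product_filter_lt]
  rfl

lemma pairProd_of_card_le_one (hι : Fintype.card ι ≤ 1) (w : X → X → M) (x : ι → X) :
    pairProd w x = 1 := by
  have := Fintype.card_le_one_iff_subsingleton.1 hι
  exact Finset.prod_eq_one fun q hq =>
    absurd (Subsingleton.elim q.1 q.2) (Finset.mem_filter.1 hq).2.ne

lemma pairProd_eq_mul_subtype (w : X → X → M) (P : ι → Prop) [DecidablePred P] (x : ι → X)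
    (h : ∀ i j, P i → ¬ P j → w (x i) (x j) = 1 ∧ w (x j) (x i) = 1) :
    pairProd w x =
      pairProd w (fun i : {i // P i} => x i) * pairProd w (fun i : {i // ¬ P i} => x i) := by
  have split (f : ι → M) : ∏ i, f i = (∏ i : {i // P i}, f i) * ∏ i : {i // ¬ P i}, f i :=
    (Fintype.prod_subtype_mul_prod_subtype P f).symm
  have cross (i : {i // P i}) (j : {j // ¬ P j}) :
      (if i.1 < j.1 then w (x i) (x j) else 1) = 1 ∧
        (if j.1 < i.1 then w (x j) (x i) else 1) = 1 := by
    simp [h i j i.2 j.2]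
  simp_rw [pairProd, Finset.prod_filter, Fintype.prod_prod_type]
  rw [split]
  congr 1
  · refine Finset.prod_congr rfl fun i _ => ?_
    rw [split, Finset.prod_eq_one (s := (Finset.univ : Finset {j // ¬ P j}))
      fun j _ => (cross i j).1, mul_one]
    rfl
  · refine Finset.prod_congr rfl fun i _ => ?_
    rw [split, Finset.prod_eq_one (s := (Finset.univ : Finset {j // P j}))
      fun j _ => (cross j i).2, one_mul]
    rfl

lemma measurable_pairProd [MeasurableSpace X] [MeasurableSpace M] [MeasurableMul₂ M]
    {w : X → X → M} (hw : Measurable (Function.uncurry w)) :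
    Measurable (pairProd w : (ι → X) → M) := by
  unfold pairProd
  exact Finset.measurable_prod _ fun q _ =>
    hw.comp (f := fun x : ι → X => (x q.1, x q.2))
      ((measurable_pi_apply q.1).prodMk (measurable_pi_apply q.2))

end PairProduct

/-! ### Powers of a measure -/

section PiMeasure

variable {X Y ι : Type*} [Fintype ι] [MeasurableSpace X] [MeasurableSpace Y]

lemma pi_zero [Nonempty ι] : (Measure.pi fun _ : ι => (0 : Measure X)) = 0 :=
  Measure.measure_univ_eq_zero.1 (by simp [Measure.pi_univ])

lemma pi_add_eq_sum_powerset [DecidableEq ι] (μ₁ μ₂ : Measure X) [IsFiniteMeasure μ₁]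
    [IsFiniteMeasure μ₂] :
    (Measure.pi fun _ : ι => μ₁ + μ₂) =
      ∑ s ∈ (Finset.univ : Finset ι).powerset, Measure.pi fun i => if i ∈ s then μ₁ else μ₂ := by
  have (s : Finset ι) (i : ι) : IsFiniteMeasure (if i ∈ s then μ₁ else μ₂) := by
    split_ifs <;> infer_instance
  refine Measure.pi_eq fun t _ => ?_
  simp only [Measure.finsetSum_apply, Measure.pi_pi, Measure.add_apply, Finset.prod_add]
  refine Finset.sum_congr rfl fun s _ => ?_
  rw [← Finset.prod_sdiff s.subset_univ, mul_comm]
  congr 1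
  · exact Finset.prod_congr rfl fun i hi => by rw [if_pos hi]
  · exact Finset.prod_congr rfl fun i hi => by rw [if_neg (Finset.mem_sdiff.1 hi).2]

lemma measurePreserving_piEquivPiSubtypeProd_ite (P : ι → Prop) [DecidablePred P]
    (μ₁ μ₂ : Measure X) [IsFiniteMeasure μ₁] [IsFiniteMeasure μ₂] :
    MeasurePreserving (MeasurableEquiv.piEquivPiSubtypeProd (fun _ => X) P)
      (Measure.pi fun i => if P i then μ₁ else μ₂)
      ((Measure.pi fun _ : {i // P i} => μ₁).prod (Measure.pi fun _ : {i // ¬ P i} => μ₂)) := by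
  have (i : ι) : IsFiniteMeasure (if P i then μ₁ else μ₂) := by split_ifs <;> infer_instance
  have mp := measurePreserving_piEquivPiSubtypeProd (fun i => if P i then μ₁ else μ₂) P
  simpa only [if_pos (Subtype.property (p := P) _),
    if_neg (Subtype.property (p := fun i => ¬ P i) _)] using mp

lemma pi_smul_map (c : NNReal) (μ : Measure X) [IsFiniteMeasure μ] {f : X → Y}
    (hf : Measurable f) :
    (Measure.pi fun _ : ι => c • μ.map f) =
      c ^ Fintype.card ι • (Measure.pi fun _ : ι => μ).map (f ∘ ·) := by
  have map_pi : (Measure.pi fun _ : ι => μ).map (f ∘ ·) = Measure.pi fun _ : ι => μ.map f :=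
    Measure.pi_map_pi fun _ => hf.aemeasurable
  rw [map_pi]
  refine Measure.pi_eq fun s _ => ?_
  simp only [Measure.smul_apply, Measure.pi_pi, ENNReal.smul_def, smul_eq_mul,
    Finset.prod_mul_distrib, Finset.prod_const, Finset.card_univ, ENNReal.coe_pow]

lemma measurableEmbedding_comp_left {κ : Type*} [Countable κ] [Nonempty X] {f : X → Y}
    (hf : MeasurableEmbedding f) : MeasurableEmbedding (f ∘ · : (κ → X) → κ → Y) := by
  have range_eq : Set.range (f ∘ · : (κ → X) → κ → Y) = Set.univ.pi fun _ => Set.range f := by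
    ext y
    simp only [Set.mem_range, Set.mem_univ_pi, funext_iff, Function.comp_apply]
    exact (Classical.skolem (p := fun i a => f a = y i)).symm
  refine .of_measurable_inverse (g := (hf.invFun ∘ ·)) ?_ ?_ ?_ fun x => ?_
  · exact measurable_pi_lambda _ fun i => hf.measurable.comp (measurable_pi_apply i)
  · exact range_eq ▸ .univ_pi fun _ => hf.measurableSet_range
  · exact measurable_pi_lambda _ fun i => hf.measurable_invFun.comp (measurable_pi_apply i)
  · funext i
    exact hf.leftInverse_invFun (x i)

lemma measurePreserving_comp_equiv {κ : Type*} [Fintype κ] (e : κ ≃ ι) (μ : Measure X)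
    [SigmaFinite μ] :
    MeasurePreserving (MeasurableEquiv.arrowCongr' e.symm (MeasurableEquiv.refl X))
      (Measure.pi fun _ => μ) (Measure.pi fun _ => μ) :=
  measurePreserving_arrowCongr' (fun _ => μ) (fun _ => μ) _ _ fun _ => MeasurePreserving.id μ

end PiMeasure

/-! ### Partition functions -/

section PartitionFunction

variable {X ι : Type*} [Fintype ι] [LinearOrder ι] [MeasurableSpace X]

/-- The `n`-particle partition function with pair weight `w` converges absolutely. -/
def PairIntegrable (w : X → X → ℂ) (μ : Measure X) (n : ℕ) : Prop :=
  Integrable (pairProd w : (Fin n → X) → ℂ) (Measure.pi fun _ => μ)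

/-- The canonical partition function of `n` particles with pair weight `w`. -/
noncomputable def partitionFn (w : X → X → ℂ) (μ : Measure X) (n : ℕ) : ℂ :=
  ∫ x : Fin n → X, pairProd w x ∂(Measure.pi fun _ => μ)

/-- The grand canonical partition function with pair weight `w`, as a formal power series in the
fugacity. -/
noncomputable def grandPartition (w : X → X → ℂ) (μ : Measure X) : PowerSeries ℂ :=
  PowerSeries.mk fun n => partitionFn w μ n / n.factorial

lemma coeff_grandPartition (w : X → X → ℂ) (μ : Measure X) (n : ℕ) :
    PowerSeries.coeff n (grandPartition w μ) = partitionFn w μ n / n.factorial :=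
  PowerSeries.coeff_mk _ _

lemma pairIntegrable_of_le_one (w : X → X → ℂ) (μ : Measure X) [IsFiniteMeasure μ] {n : ℕ}
    (hn : n ≤ 1) : PairIntegrable w μ n := by
  have : (pairProd w : (Fin n → X) → ℂ) = fun _ => 1 :=
    funext (pairProd_of_card_le_one (by simpa using hn) w)
  rw [PairIntegrable, this]
  exact integrable_const 1

lemma partitionFn_of_le_one (w : X → X → ℂ) (μ : Measure X) [IsProbabilityMeasure μ] {n : ℕ}
    (hn : n ≤ 1) : partitionFn w μ n = 1 := by
  simp [partitionFn, pairProd_of_card_le_one (ι := Fin n) (by simpa using hn) w]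

lemma pairIntegrable_zero (w : X → X → ℂ) (n : ℕ) : PairIntegrable w (0 : Measure X) n := by
  rcases n with - | n
  · exact pairIntegrable_of_le_one w 0 zero_le_one
  · rw [PairIntegrable, pi_zero]
    exact integrable_zero_measure

lemma grandPartition_zero (w : X → X → ℂ) : grandPartition w (0 : Measure X) = 1 := by
  ext n
  rw [coeff_grandPartition, PowerSeries.coeff_one, partitionFn]
  rcases n with - | n
  · simp [pairProd, measureReal_def]
  · simp [pi_zero]

lemma PairIntegrable.integrable {w : X → X → ℂ} {μ : Measure X} [SigmaFinite μ] {n : ℕ}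
    (h : PairIntegrable w μ n) (hι : Fintype.card ι = n) :
    Integrable (pairProd w : (ι → X) → ℂ) (Measure.pi fun _ => μ) := by
  have e := Fintype.orderIsoFinOfCardEq ι hι
  refine (((measurePreserving_comp_equiv e.toEquiv μ).integrable_comp_emb
    (MeasurableEquiv.measurableEmbedding _)).2 h).congr (.of_forall fun x => ?_)
  exact pairProd_comp_orderIso w e x

lemma integral_pairProd (w : X → X → ℂ) (μ : Measure X) [SigmaFinite μ] {n : ℕ}
    (hι : Fintype.card ι = n) :
    ∫ x : ι → X, pairProd w x ∂(Measure.pi fun _ => μ) = partitionFn w μ n := by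
  have e := Fintype.orderIsoFinOfCardEq ι hι
  rw [partitionFn, ← (measurePreserving_comp_equiv e.toEquiv μ).integral_comp']
  exact integral_congr_ae (.of_forall fun x => (pairProd_comp_orderIso w e x).symm)

end PartitionFunction

section Image

variable {X Y : Type*} [Nonempty X] [MeasurableSpace X] [MeasurableSpace Y]
  {w : Y → Y → ℂ} {w' : X → X → ℂ} {f : X → Y} {κ : ℂ}

lemma PairIntegrable.smul_map (hf : MeasurableEmbedding f)
    (hw : ∀ x y, w (f x) (f y) = κ * w' x y) {μ : Measure X} [IsFiniteMeasure μ] {n : ℕ}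
    (h : PairIntegrable w' μ n) (c : NNReal) : PairIntegrable w (c • μ.map f) n := by
  rw [PairIntegrable, pi_smul_map c μ hf.measurable]
  refine Integrable.smul_measure_nnreal ?_
  refine (measurableEmbedding_comp_left hf).integrable_map_iff.2 ?_
  refine (h.const_mul (κ ^ n.choose 2)).congr (.of_forall fun x => ?_)
  simp_rw [Function.comp_apply, pairProd_comp, hw, pairProd_const_mul, Fintype.card_fin]

lemma partitionFn_smul_map (hf : MeasurableEmbedding f)
    (hw : ∀ x y, w (f x) (f y) = κ * w' x y) (μ : Measure X) [IsFiniteMeasure μ] (c : NNReal)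
    (n : ℕ) :
    partitionFn w (c • μ.map f) n = c ^ n * κ ^ n.choose 2 * partitionFn w' μ n := by
  rw [partitionFn, pi_smul_map c μ hf.measurable, integral_smul_nnreal_measure,
    (measurableEmbedding_comp_left hf).integral_map]
  simp_rw [pairProd_comp, hw, pairProd_const_mul, Fintype.card_fin, integral_const_mul]
  rw [NNReal.smul_def, Complex.real_smul, partitionFn]
  push_cast
  ring

lemma coeff_grandPartition_smul_map (hf : MeasurableEmbedding f)
    (hw : ∀ x y, w (f x) (f y) = κ * w' x y) (μ : Measure X) [IsFiniteMeasure μ] (c : NNReal)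
    (n : ℕ) :
    PowerSeries.coeff n (grandPartition w (c • μ.map f)) =
      c ^ n * κ ^ n.choose 2 * PowerSeries.coeff n (grandPartition w' μ) := by
  rw [coeff_grandPartition, coeff_grandPartition, partitionFn_smul_map hf hw, mul_div_assoc]

end Image

/-! ### Superposition of gases without interaction -/

section NonInteracting

variable {X α : Type*} [MeasurableSpace X] {w : X → X → ℂ} {μ₁ μ₂ : Measure X}

/-- Particles distributed according to `μ₁` do not interact with particles distributed according to
`μ₂`. -/
def NonInteracting (w : X → X → ℂ) (μ₁ μ₂ : Measure X) : Prop :=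
  ∀ᶠ z in ae μ₁ ×ˢ ae μ₂, w z.1 z.2 = 1 ∧ w z.2 z.1 = 1

lemma NonInteracting.of_forall_mem {A B : Set X} (hA : ∀ᵐ x ∂μ₁, x ∈ A) (hB : ∀ᵐ x ∂μ₂, x ∈ B)
    (h : ∀ x ∈ A, ∀ y ∈ B, w x y = 1 ∧ w y x = 1) : NonInteracting w μ₁ μ₂ :=
  Filter.eventually_of_mem (Filter.prod_mem_prod hA hB) fun _ hz => h _ hz.1 _ hz.2

lemma NonInteracting.smul_map {Y Z : Type*} [MeasurableSpace Y] [MeasurableSpace Z] {f : Y → X}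
    {g : Z → X} (hf : MeasurableEmbedding f) (hg : MeasurableEmbedding g)
    (h : ∀ y z, w (f y) (g z) = 1 ∧ w (g z) (f y) = 1) (μ : Measure Y) (ν : Measure Z)
    (c d : NNReal) : NonInteracting w (c • μ.map f) (d • ν.map g) := by
  refine .of_forall_mem
    (Measure.ae_smul_measure (ae_map_mem_range f hf.measurableSet_range μ) c)
    (Measure.ae_smul_measure (ae_map_mem_range g hg.measurableSet_range ν) d) ?_
  rintro _ ⟨y, rfl⟩ _ ⟨z, rfl⟩
  exact h y z

lemma NonInteracting.finsetSum_right {s : Finset α} {μ : α → Measure X}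
    (h : ∀ a ∈ s, NonInteracting w μ₁ (μ a)) : NonInteracting w μ₁ (∑ a ∈ s, μ a) := by
  classical
  induction s using Finset.induction_on with
  | empty => simp [NonInteracting]
  | insert a s ha ih =>
    have ae_add : ae (μ a + ∑ b ∈ s, μ b) = ae (μ a) ⊔ ae (∑ b ∈ s, μ b) :=
      Filter.ext fun _ => ae_add_measure_iff
    rw [Finset.sum_insert ha, NonInteracting, ae_add, Filter.prod_sup, Filter.eventually_sup]
    exact ⟨h a (Finset.mem_insert_self a s), ih fun b hb => h b (Finset.mem_insert_of_mem hb)⟩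

lemma NonInteracting.ae_pairProd_eq_mul {ι : Type*} [Fintype ι] [LinearOrder ι]
    [IsFiniteMeasure μ₁] [IsFiniteMeasure μ₂] (h : NonInteracting w μ₁ μ₂) (P : ι → Prop)
    [DecidablePred P] :
    ∀ᵐ x : ι → X ∂(Measure.pi fun i => if P i then μ₁ else μ₂), pairProd w x =
      pairProd w (fun i : {i // P i} => x i) * pairProd w (fun i : {i // ¬ P i} => x i) := by
  have (i : ι) : IsFiniteMeasure (if P i then μ₁ else μ₂) := by split_ifs <;> infer_instance
  obtain ⟨A, hA, B, hB, hAB⟩ := Filter.eventually_prod_iff.1 h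
  have mem (i : ι) : ∀ᵐ y ∂(if P i then μ₁ else μ₂), (P i → A y) ∧ (¬ P i → B y) := by
    split_ifs with hi
    · simpa [hi] using hA
    · simpa [hi] using hB
  have mem_all : ∀ᵐ x : ι → X ∂(Measure.pi fun i => if P i then μ₁ else μ₂),
      ∀ i, (P i → A (x i)) ∧ (¬ P i → B (x i)) :=
    Filter.eventually_all.2 fun i =>
      (Measure.tendsto_eval_ae_ae (μ := fun i => if P i then μ₁ else μ₂)).eventually (mem i)
  filter_upwards [mem_all] with x hx
  exact pairProd_eq_mul_subtype w P x fun i j hi hj => hAB ((hx i).1 hi) ((hx j).2 hj)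

variable [IsFiniteMeasure μ₁] [IsFiniteMeasure μ₂]

lemma NonInteracting.integrable_ite {ι : Type*} [Fintype ι] [LinearOrder ι]
    (h : NonInteracting w μ₁ μ₂) (P : ι → Prop) [DecidablePred P] {k l : ℕ}
    (hk : Fintype.card {i // P i} = k) (hl : Fintype.card {i // ¬ P i} = l)
    (h₁ : PairIntegrable w μ₁ k) (h₂ : PairIntegrable w μ₂ l) :
    Integrable (pairProd w : (ι → X) → ℂ) (Measure.pi fun i => if P i then μ₁ else μ₂) :=
  Integrable.congr (((measurePreserving_piEquivPiSubtypeProd_ite P μ₁ μ₂).integrable_comp_emb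
    (MeasurableEquiv.measurableEmbedding _)).2 (.mul_prod (h₁.integrable hk) (h₂.integrable hl)))
    ((h.ae_pairProd_eq_mul P).mono fun _ hx => hx.symm)

lemma NonInteracting.integral_ite {ι : Type*} [Fintype ι] [LinearOrder ι]
    (h : NonInteracting w μ₁ μ₂) (P : ι → Prop) [DecidablePred P] {k l : ℕ}
    (hk : Fintype.card {i // P i} = k) (hl : Fintype.card {i // ¬ P i} = l) :
    ∫ x : ι → X, pairProd w x ∂(Measure.pi fun i => if P i then μ₁ else μ₂) =
      partitionFn w μ₁ k * partitionFn w μ₂ l := by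
  rw [integral_congr_ae (h.ae_pairProd_eq_mul P), ← integral_pairProd w μ₁ hk,
    ← integral_pairProd w μ₂ hl, ← integral_prod_mul]
  exact (measurePreserving_piEquivPiSubtypeProd_ite P μ₁ μ₂).integral_comp'
    (fun z : ({i // P i} → X) × ({i // ¬ P i} → X) => pairProd w z.1 * pairProd w z.2)

variable {n : ℕ}

lemma NonInteracting.integrable_ite_mem (h : NonInteracting w μ₁ μ₂) (s : Finset (Fin n))
    (h₁ : PairIntegrable w μ₁ s.card) (h₂ : PairIntegrable w μ₂ (n - s.card)) :
    Integrable (pairProd w : (Fin n → X) → ℂ) (Measure.pi fun i => if i ∈ s then μ₁ else μ₂) :=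
  h.integrable_ite (· ∈ s) (by simp) (by simp [Fintype.card_subtype_compl]) h₁ h₂

lemma NonInteracting.integral_ite_mem (h : NonInteracting w μ₁ μ₂) (s : Finset (Fin n)) :
    ∫ x, pairProd w x ∂(Measure.pi fun i => if i ∈ s then μ₁ else μ₂) =
      partitionFn w μ₁ s.card * partitionFn w μ₂ (n - s.card) :=
  h.integral_ite (· ∈ s) (by simp) (by simp [Fintype.card_subtype_compl])

lemma PairIntegrable.add (h : NonInteracting w μ₁ μ₂) (h₁ : ∀ k ≤ n, PairIntegrable w μ₁ k)
    (h₂ : ∀ k ≤ n, PairIntegrable w μ₂ k) : PairIntegrable w (μ₁ + μ₂) n := by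
  rw [PairIntegrable, pi_add_eq_sum_powerset, integrable_finsetSum_measure]
  exact fun s _ => h.integrable_ite_mem s (h₁ _ (card_finset_fin_le s)) (h₂ _ (Nat.sub_le _ _))

lemma partitionFn_add (h : NonInteracting w μ₁ μ₂) (h₁ : ∀ k ≤ n, PairIntegrable w μ₁ k)
    (h₂ : ∀ k ≤ n, PairIntegrable w μ₂ k) :
    partitionFn w (μ₁ + μ₂) n = ∑ k ∈ Finset.range (n + 1),
      n.choose k * (partitionFn w μ₁ k * partitionFn w μ₂ (n - k)) := by
  rw [partitionFn, pi_add_eq_sum_powerset, integral_finsetSum_measure fun s _ =>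
    h.integrable_ite_mem s (h₁ _ (card_finset_fin_le s)) (h₂ _ (Nat.sub_le _ _))]
  simp_rw [h.integral_ite_mem]
  rw [Finset.sum_powerset_apply_card fun k => partitionFn w μ₁ k * partitionFn w μ₂ (n - k)]
  simp only [Finset.card_univ, Fintype.card_fin, nsmul_eq_mul]

lemma coeff_grandPartition_add (h : NonInteracting w μ₁ μ₂)
    (h₁ : ∀ k ≤ n, PairIntegrable w μ₁ k) (h₂ : ∀ k ≤ n, PairIntegrable w μ₂ k) :
    PowerSeries.coeff n (grandPartition w (μ₁ + μ₂)) =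
      PowerSeries.coeff n (grandPartition w μ₁ * grandPartition w μ₂) := by
  simp_rw [PowerSeries.coeff_mul, coeff_grandPartition, partitionFn_add h h₁ h₂,
    Finset.Nat.sum_antidiagonal_eq_sum_range_succ fun k l =>
      partitionFn w μ₁ k / k.factorial * (partitionFn w μ₂ l / l.factorial), Finset.sum_div]
  refine Finset.sum_congr rfl fun k hk => ?_
  rw [Nat.cast_choose ℂ (Finset.mem_range_succ_iff.1 hk)]
  have := Nat.cast_ne_zero (R := ℂ).2 n.factorial_ne_zero
  field_simp

variable {s : Finset α} {μ : α → Measure X} [∀ a, IsFiniteMeasure (μ a)]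

lemma pairIntegrable_finsetSum (h : (s : Set α).Pairwise fun a b => NonInteracting w (μ a) (μ b))
    (hμ : ∀ a ∈ s, ∀ k ≤ n, PairIntegrable w (μ a) k) :
    ∀ k ≤ n, PairIntegrable w (∑ a ∈ s, μ a) k := by
  classical
  induction s using Finset.induction_on with
  | empty => exact fun k _ => pairIntegrable_zero w k
  | insert a s ha ih =>
    rw [Finset.coe_insert, Set.pairwise_insert_of_notMem (by simpa using ha)] at h
    rw [Finset.forall_mem_insert] at hμ
    rw [Finset.sum_insert ha]
    exact fun k hk => PairIntegrable.add (.finsetSum_right fun b hb => (h.2 b hb).1)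
      (fun l hl => hμ.1 l (hl.trans hk)) fun l hl => ih h.1 hμ.2 l (hl.trans hk)

lemma coeff_grandPartition_finsetSum
    (h : (s : Set α).Pairwise fun a b => NonInteracting w (μ a) (μ b))
    (hμ : ∀ a ∈ s, ∀ k ≤ n, PairIntegrable w (μ a) k) :
    ∀ k ≤ n, PowerSeries.coeff k (grandPartition w (∑ a ∈ s, μ a)) =
      PowerSeries.coeff k (∏ a ∈ s, grandPartition w (μ a)) := by
  classical
  induction s using Finset.induction_on with
  | empty => simp [grandPartition_zero]
  | insert a s ha ih =>
    rw [Finset.coe_insert, Set.pairwise_insert_of_notMem (by simpa using ha)] at h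
    rw [Finset.forall_mem_insert] at hμ
    intro k hk
    rw [Finset.sum_insert ha, Finset.prod_insert ha,
      coeff_grandPartition_add (.finsetSum_right fun b hb => (h.2 b hb).1)
        (fun l hl => hμ.1 l (hl.trans hk))
        fun l hl => pairIntegrable_finsetSum h.1 hμ.2 l (hl.trans hk),
      PowerSeries.coeff_mul, PowerSeries.coeff_mul]
    refine Finset.sum_congr rfl fun l hl => ?_
    rw [ih h.1 hμ.2 l.2 ((Finset.HasAntidiagonal.antidiagonal.snd_le hl).trans hk)]

end NonInteracting

/-! ### Integrability of self-similar gases -/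

section Truncation

variable {X Y α : Type*} [MeasurableSpace X] [MeasurableSpace Y] {w : X → X → ℂ}
  {μ₁ μ₂ : Measure X} {n : ℕ}

/-- The integral of the modulus of the Boltzmann factor of `n` particles, truncated at height `M`;
it is finite for finite `μ` whether or not the partition function converges. -/
noncomputable def truncatedMass (w : X → X → ℂ) (M : NNReal) (μ : Measure X) (n : ℕ) : ENNReal :=
  ∫⁻ x : Fin n → X, min ‖pairProd w x‖ₑ M ∂(Measure.pi fun _ => μ)

lemma truncatedMass_ne_top (w : X → X → ℂ) (M : NNReal) (μ : Measure X) [IsFiniteMeasure μ]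
    (n : ℕ) : truncatedMass w M μ n ≠ ⊤ :=
  ((lintegral_mono fun _ => min_le_right _ _).trans_lt (by
    simpa only [lintegral_const] using
      ENNReal.mul_lt_top ENNReal.coe_lt_top (measure_lt_top _ _))).ne

lemma iSup_truncatedMass (hw : Measurable (Function.uncurry w)) (μ : Measure X) (n : ℕ) :
    ⨆ m : ℕ, truncatedMass w m μ n =
      ∫⁻ x : Fin n → X, ‖pairProd w x‖ₑ ∂(Measure.pi fun _ => μ) := by
  have iSup_min (r : ENNReal) : ⨆ m : ℕ, min r ((m : NNReal) : ENNReal) = r := by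
    simp_rw [ENNReal.coe_natCast, ← inf_iSup_eq, ENNReal.iSup_natCast, inf_top_eq]
  have mono : Monotone fun (m : ℕ) (x : Fin n → X) =>
      min ‖pairProd w x‖ₑ ((m : NNReal) : ENNReal) :=
    fun m m' hm x => min_le_min_left _ (ENNReal.coe_le_coe.2 (Nat.cast_le.2 hm))
  simp only [truncatedMass]
  rw [← lintegral_iSup (fun m => (measurable_pairProd hw).enorm.min measurable_const) mono]
  simp_rw [iSup_min]

lemma truncatedMass_zero (w : X → X → ℂ) (M : NNReal) (hn : n ≠ 0) :
    truncatedMass w M (0 : Measure X) n = 0 := by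
  have : Nonempty (Fin n) := ⟨⟨0, Nat.pos_of_ne_zero hn⟩⟩
  rw [truncatedMass, pi_zero, lintegral_zero_measure]

variable [IsFiniteMeasure μ₁] [IsFiniteMeasure μ₂]

-- Only the terms with all particles in one component involve `n`-particle integrals.
lemma NonInteracting.exists_truncatedMass_add_le (h : NonInteracting w μ₁ μ₂) (hn : n ≠ 0)
    (h₁ : ∀ k < n, PairIntegrable w μ₁ k) (h₂ : ∀ k < n, PairIntegrable w μ₂ k) :
    ∃ C : NNReal, ∀ M, truncatedMass w M (μ₁ + μ₂) n ≤
      truncatedMass w M μ₁ n + truncatedMass w M μ₂ n + C := by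
  have univ_ne_empty : (Finset.univ : Finset (Fin n)) ≠ ∅ :=
    Finset.nonempty_iff_ne_empty.1 ⟨⟨0, Nat.pos_of_ne_zero hn⟩, Finset.mem_univ _⟩
  let mixed : Finset (Finset (Fin n)) := (Finset.univ.powerset.erase Finset.univ).erase ∅
  let C := ∑ s ∈ mixed, ∫⁻ x, ‖pairProd w x‖ₑ ∂(Measure.pi fun i => if i ∈ s then μ₁ else μ₂)
  have C_ne_top : C ≠ ⊤ := by
    refine ENNReal.sum_ne_top.2 fun s hs => ?_
    simp only [mixed, Finset.mem_erase, Finset.powerset_univ, Finset.mem_univ, and_true] at hs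
    have card_lt : s.card < n := by simpa using (Finset.card_lt_iff_ne_univ s).2 hs.2
    have card_pos : 0 < s.card := Finset.card_pos.2 (Finset.nonempty_iff_ne_empty.2 hs.1)
    exact (h.integrable_ite_mem s (h₁ _ card_lt) (h₂ _ (by omega))).2.ne
  refine ⟨C.toNNReal, fun M => ?_⟩
  rw [ENNReal.coe_toNNReal C_ne_top, truncatedMass, pi_add_eq_sum_powerset,
    lintegral_finsetSum_measure,
    ← Finset.add_sum_erase _ _ (Finset.mem_powerset_self Finset.univ),
    ← Finset.add_sum_erase _ _ (Finset.mem_erase.2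
      ⟨univ_ne_empty.symm, Finset.empty_mem_powerset Finset.univ⟩), add_assoc]
  simp only [Finset.mem_univ, if_true, Finset.notMem_empty, if_false]
  gcongr
  · rfl
  · rfl
  · exact Finset.sum_le_sum fun s _ => lintegral_mono fun x => min_le_left _ _

lemma exists_truncatedMass_finsetSum_le {s : Finset α} {μ : α → Measure X}
    [∀ a, IsFiniteMeasure (μ a)]
    (h : (s : Set α).Pairwise fun a b => NonInteracting w (μ a) (μ b)) (hn : n ≠ 0)
    (hμ : ∀ a ∈ s, ∀ k < n, PairIntegrable w (μ a) k) :
    ∃ C : NNReal, ∀ M, truncatedMass w M (∑ a ∈ s, μ a) n ≤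
      ∑ a ∈ s, truncatedMass w M (μ a) n + C := by
  classical
  induction s using Finset.induction_on with
  | empty => exact ⟨0, fun M => by simp [truncatedMass_zero w M hn]⟩
  | insert a s ha ih =>
    rw [Finset.coe_insert, Set.pairwise_insert_of_notMem (by simpa using ha)] at h
    rw [Finset.forall_mem_insert] at hμ
    obtain ⟨C, hC⟩ := ih h.1 hμ.2
    have rest (k) (hk : k < n) : PairIntegrable w (∑ b ∈ s, μ b) k :=
      pairIntegrable_finsetSum h.1 (fun b hb l hl => hμ.2 b hb l (hl.trans_lt hk)) k le_rfl
    obtain ⟨C', hC'⟩ := NonInteracting.exists_truncatedMass_add_le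
      (.finsetSum_right fun b hb => (h.2 b hb).1) hn hμ.1 rest
    refine ⟨C + C', fun M => ?_⟩
    rw [Finset.sum_insert ha, Finset.sum_insert ha, ENNReal.coe_add]
    calc truncatedMass w M (μ a + ∑ b ∈ s, μ b) n
        ≤ truncatedMass w M (μ a) n + truncatedMass w M (∑ b ∈ s, μ b) n + C' := hC' M
      _ ≤ truncatedMass w M (μ a) n + (∑ b ∈ s, truncatedMass w M (μ b) n + C) + C' := by
        gcongr
        exact hC M
      _ = truncatedMass w M (μ a) n + ∑ b ∈ s, truncatedMass w M (μ b) n + (C + C') := by ring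

lemma truncatedMass_smul_map_le [Nonempty Y] {f : Y → X} (hf : MeasurableEmbedding f)
    {w' : Y → Y → ℂ} {κ : ℂ} (hw : ∀ x y, w (f x) (f y) = κ * w' x y) (μ : Measure Y)
    [IsFiniteMeasure μ] (c M : NNReal) (n : ℕ) :
    truncatedMass w M (c • μ.map f) n ≤
      (c ^ n * max 1 (‖κ‖₊ ^ n.choose 2) : NNReal) * truncatedMass w' M μ n := by
  have min_mul_le (a b : ENNReal) : min (a * b) M ≤ max 1 a * min b M := by
    rw [mul_min]
    exact min_le_min (by gcongr; exact le_max_right _ _) (le_mul_of_one_le_left' (le_max_left _ _))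
  rw [truncatedMass, pi_smul_map c μ hf.measurable, lintegral_smul_measure,
    (measurableEmbedding_comp_left hf).lintegral_map, Fintype.card_fin, ENNReal.smul_def,
    smul_eq_mul, ENNReal.coe_mul, mul_assoc, truncatedMass,
    ← lintegral_const_mul' (max 1 (‖κ‖₊ ^ n.choose 2) : NNReal) _ ENNReal.coe_ne_top]
  gcongr with x
  rw [pairProd_comp]
  simp_rw [hw]
  rw [pairProd_const_mul, Fintype.card_fin, enorm_mul, enorm_pow]
  push_cast
  exact min_mul_le _ _

end Truncation

section SelfSimilar

variable {X α : Type*} [MeasurableSpace X] [Fintype α]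

/-- A gas on `X` with pair weight `w` and particle distribution `μ` is self-similar if `μ` is the
average of its images under embeddings `S a`, each of which multiplies the pair weight by `κ`, and
particles in the images of distinct embeddings do not interact. -/
structure SelfSimilar (w : X → X → ℂ) (μ : Measure X) (S : α → X → X) (κ : ℂ) : Prop where
  measurableEmbedding (a : α) : MeasurableEmbedding (S a)
  eq_sum_map : μ = ∑ a, (Fintype.card α : NNReal)⁻¹ • μ.map (S a)
  scale (a : α) (x y : X) : w (S a x) (S a y) = κ * w x y
  eq_one (a b : α) (hab : a ≠ b) (x y : X) : w (S a x) (S b y) = 1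

/-- The grand canonical partition function of a copy of a gas with grand canonical partition
function `Z`, of total mass scaled by `q⁻¹` and with pair weights scaled by `κ`. -/
noncomputable def cellSeries (q : ℕ) (κ : ℂ) (Z : PowerSeries ℂ) : PowerSeries ℂ :=
  PowerSeries.mk fun n => (q : ℂ)⁻¹ ^ n * κ ^ n.choose 2 * PowerSeries.coeff n Z

lemma grandPartition_inv_smul_map {Y : Type*} [MeasurableSpace Y] [Nonempty X] {w : Y → Y → ℂ}
    {w' : X → X → ℂ} {f : X → Y} {κ : ℂ} (hf : MeasurableEmbedding f)
    (hw : ∀ x y, w (f x) (f y) = κ * w' x y) (μ : Measure X) [IsFiniteMeasure μ] (q : ℕ) :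
    grandPartition w ((q : NNReal)⁻¹ • μ.map f) = cellSeries q κ (grandPartition w' μ) := by
  ext n
  rw [coeff_grandPartition_smul_map hf hw, cellSeries, PowerSeries.coeff_mk, NNReal.coe_inv,
    NNReal.coe_natCast, Complex.ofReal_inv, Complex.ofReal_natCast]

namespace SelfSimilar

variable {w : X → X → ℂ} {μ : Measure X} {S : α → X → X} {κ : ℂ}

lemma pairwise_nonInteracting (h : SelfSimilar w μ S κ) :
    ((Finset.univ : Finset α) : Set α).Pairwise fun a b => NonInteracting w
      ((Fintype.card α : NNReal)⁻¹ • μ.map (S a)) ((Fintype.card α : NNReal)⁻¹ • μ.map (S b)) := by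
  intro a _ b _ hab
  exact .smul_map (h.measurableEmbedding a) (h.measurableEmbedding b)
    (fun x y => ⟨h.eq_one a b hab x y, h.eq_one b a hab.symm y x⟩) μ μ _ _

variable [Nonempty X] [IsFiniteMeasure μ]

lemma exists_truncatedMass_le (h : SelfSimilar w μ S κ) {n : ℕ} (hn : n ≠ 0)
    (hμ : ∀ k < n, PairIntegrable w μ k) :
    ∃ C : NNReal, ∀ M, truncatedMass w M μ n ≤
      (Fintype.card α * ((Fintype.card α : NNReal)⁻¹ ^ n * max 1 (‖κ‖₊ ^ n.choose 2)) : NNReal) *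
        truncatedMass w M μ n + C := by
  obtain ⟨C, hC⟩ := exists_truncatedMass_finsetSum_le h.pairwise_nonInteracting hn
    fun a _ k hk => (hμ k hk).smul_map (h.measurableEmbedding a) (h.scale a) _
  refine ⟨C, fun M => ?_⟩
  calc truncatedMass w M μ n
      = truncatedMass w M (∑ a, (Fintype.card α : NNReal)⁻¹ • μ.map (S a)) n := by
        rw [← h.eq_sum_map]
    _ ≤ ∑ a, truncatedMass w M ((Fintype.card α : NNReal)⁻¹ • μ.map (S a)) n + C := hC M
    _ ≤ ∑ _a : α, ((Fintype.card α : NNReal)⁻¹ ^ n * max 1 (‖κ‖₊ ^ n.choose 2) : NNReal) *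
          truncatedMass w M μ n + C := by
        gcongr with a
        exact truncatedMass_smul_map_le (h.measurableEmbedding a) (h.scale a) μ _ M n
    _ = _ := by
        simp only [Finset.sum_const, Finset.card_univ, nsmul_eq_mul, ENNReal.coe_mul,
          ENNReal.coe_natCast, mul_assoc]

lemma pairIntegrable_of_forall_lt (h : SelfSimilar w μ S κ) (hw : Measurable (Function.uncurry w))
    {n : ℕ} (hn : n ≠ 0) (hμ : ∀ k < n, PairIntegrable w μ k)
    (hθ : Fintype.card α * ((Fintype.card α : NNReal)⁻¹ ^ n * max 1 (‖κ‖₊ ^ n.choose 2)) < 1) :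
    PairIntegrable w μ n := by
  obtain ⟨C, hC⟩ := h.exists_truncatedMass_le hn hμ
  set θ := Fintype.card α * ((Fintype.card α : NNReal)⁻¹ ^ n * max 1 (‖κ‖₊ ^ n.choose 2))
  have bound (M : NNReal) : truncatedMass w M μ n ≤ (C / (1 - θ) : NNReal) := by
    have le := hC M
    lift truncatedMass w M μ n to NNReal using truncatedMass_ne_top w M μ n with J
    norm_cast at le ⊢
    rw [le_div_iff₀ (tsub_pos_of_lt hθ), mul_tsub, mul_one, tsub_le_iff_left, mul_comm]
    exact le
  refine ⟨(measurable_pairProd hw).aestronglyMeasurable, ?_⟩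
  rw [HasFiniteIntegral, ← iSup_truncatedMass hw]
  exact (iSup_le fun m : ℕ => bound m).trans_lt ENNReal.coe_lt_top

lemma pairIntegrable (h : SelfSimilar w μ S κ) (hw : Measurable (Function.uncurry w)) {n : ℕ}
    (hθ : ∀ k, 2 ≤ k → k ≤ n →
      Fintype.card α * ((Fintype.card α : NNReal)⁻¹ ^ k * max 1 (‖κ‖₊ ^ k.choose 2)) < 1) :
    PairIntegrable w μ n := by
  induction n using Nat.strong_induction_on with
  | _ n ih =>
    rcases Nat.lt_or_ge n 2 with hn | hn
    · exact pairIntegrable_of_le_one w μ (Nat.lt_succ_iff.1 hn)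
    · exact h.pairIntegrable_of_forall_lt hw (by omega)
        (fun k hk => ih k hk fun l hl hlk => hθ l hl (hlk.trans hk.le)) (hθ n hn le_rfl)

lemma coeff_grandPartition_eq (h : SelfSimilar w μ S κ) {n : ℕ}
    (hμ : ∀ k ≤ n, PairIntegrable w μ k) :
    PowerSeries.coeff n (grandPartition w μ) = PowerSeries.coeff n
      (cellSeries (Fintype.card α) κ (grandPartition w μ) ^ Fintype.card α) := by
  calc PowerSeries.coeff n (grandPartition w μ)
      = PowerSeries.coeff n
          (grandPartition w (∑ a, (Fintype.card α : NNReal)⁻¹ • μ.map (S a))) := by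
        rw [← h.eq_sum_map]
    _ = PowerSeries.coeff n
          (∏ a, grandPartition w ((Fintype.card α : NNReal)⁻¹ • μ.map (S a))) :=
        coeff_grandPartition_finsetSum h.pairwise_nonInteracting (fun a _ k hk =>
          (hμ k hk).smul_map (h.measurableEmbedding a) (h.scale a) _) n le_rfl
    _ = _ := by
        simp_rw [fun a => grandPartition_inv_smul_map (h.measurableEmbedding a) (h.scale a) μ,
          Finset.prod_const, Finset.card_univ]

end SelfSimilar

end SelfSimilar

/-! ### The quadratic recurrence -/

section PowerSeries

open PowerSeries

lemma coeff_X_mul_derivative {R : Type*} [CommSemiring R] (g : PowerSeries R) (n : ℕ) :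
    coeff n (X * derivative R g) = n * coeff n g := by
  rcases n with - | n
  · simp
  · rw [coeff_succ_X_mul, coeff_derivative]
    push_cast
    ring

-- The logarithmic derivative of `f ^ q`, cleared of denominators and read off coefficientwise.
lemma sum_natCast_sub_mul_coeff_pow {R : Type*} [CommSemiring R] (f : PowerSeries R) (q n : ℕ) :
    ∑ k ∈ Finset.range (n + 1), ((n - k : ℕ) : R) * (coeff k f * coeff (n - k) (f ^ q)) =
      q * ∑ k ∈ Finset.range (n + 1), (k : R) * (coeff k f * coeff (n - k) (f ^ q)) := by
  have derivative_pow : f * (X * derivative R (f ^ q)) =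
      C (q : R) * ((X * derivative R f) * f ^ q) := by
    rw [Derivation.leibniz_pow, map_natCast]
    rcases q with - | q
    · simp
    · simp only [Nat.add_sub_cancel, nsmul_eq_mul, smul_eq_mul]
      ring
  have coeff_eq := congrArg (coeff n) derivative_pow
  rw [coeff_C_mul, coeff_mul, coeff_mul, Finset.Nat.sum_antidiagonal_eq_sum_range_succ_mk,
    Finset.Nat.sum_antidiagonal_eq_sum_range_succ_mk] at coeff_eq
  simp only [coeff_X_mul_derivative] at coeff_eq
  simpa only [mul_assoc, mul_left_comm] using coeff_eq

lemma sum_natCast_mul_coeff_mul {R : Type*} [CommSemiring R] {f Z : PowerSeries R} {q n : ℕ}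
    (hZ : ∀ k ≤ n, coeff k Z = coeff k (f ^ q)) :
    ∑ k ∈ Finset.range (n + 1), (k : R) * (coeff k Z * coeff (n - k) f) =
      q * ∑ k ∈ Finset.range (n + 1), (k : R) * (coeff k f * coeff (n - k) Z) := by
  have rec_eq := sum_natCast_sub_mul_coeff_pow f q n
  rw [← Finset.sum_range_reflect] at rec_eq
  refine (Finset.sum_congr rfl fun k hk => ?_).trans (rec_eq.trans (congrArg _ ?_))
  · have hk := Finset.mem_range_succ_iff.1 hk
    rw [Nat.add_sub_cancel, Nat.sub_sub_self hk, hZ k hk, mul_comm (coeff k (f ^ q))]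
  · exact Finset.sum_congr rfl fun k _ => by rw [hZ (n - k) (Nat.sub_le n k)]

end PowerSeries

section Recurrence

/-- The exponent `n + (n choose 2) β` by which the `n`-particle partition function of a log gas at
inverse temperature `β` scales under a dilation. -/
noncomputable def scalingExponent (β : ℂ) (n : ℕ) : ℂ := n + n.choose 2 * β

lemma scalingExponent_mul_one_sub {n k : ℕ} (hk : k ≤ n) (hn : n ≠ 0) (β : ℂ) :
    scalingExponent β n * (1 - 2 * k / n) = scalingExponent β (n - k) - scalingExponent β k := by
  have : (n : ℂ) ≠ 0 := Nat.cast_ne_zero.2 hn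
  simp only [scalingExponent, Nat.cast_choose_two, Nat.cast_sub hk]
  field_simp
  ring

lemma scalingExponent_zero (β : ℂ) : scalingExponent β 0 = 0 := by simp [scalingExponent]

lemma one_lt_re_scalingExponent {n : ℕ} {β : ℂ} (hn : 2 ≤ n) (hβ : -2 / (n : ℝ) < β.re) :
    1 < (scalingExponent β n).re := by
  have two_le : (2 : ℝ) ≤ n := mod_cast hn
  have re_eq : (scalingExponent β n).re = 1 + (n - 1) * (1 + n * β.re / 2) := by
    have : scalingExponent β n = ((n : ℝ) : ℂ) + ((n * (n - 1) / 2 : ℝ) : ℂ) * β := by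
      rw [scalingExponent, Nat.cast_choose_two]
      push_cast
      rfl
    rw [this, Complex.add_re, Complex.re_ofReal_mul, Complex.ofReal_re]
    ring
  rw [div_lt_iff₀ (by linarith)] at hβ
  rw [re_eq, lt_add_iff_pos_right]
  exact mul_pos (by linarith) (by linarith)

lemma neg_two_div_lt_of_le {n m : ℕ} {x : ℝ} (hx : -2 / (n : ℝ) < x) (hm : m ≠ 0) (hmn : m ≤ n) :
    -2 / (m : ℝ) < x := by
  have : (0 : ℝ) < m := mod_cast Nat.pos_of_ne_zero hm
  refine lt_of_le_of_lt ?_ hx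
  rw [neg_div, neg_div, neg_le_neg_iff]
  gcongr

lemma sinh_ne_zero_of_re_pos {z : ℂ} (hz : 0 < z.re) : Complex.sinh z ≠ 0 := by
  rw [Complex.sinh, div_ne_zero_iff, sub_ne_zero]
  refine ⟨fun h => ?_, two_ne_zero⟩
  have := congrArg norm h
  rw [Complex.norm_exp, Complex.norm_exp, Real.exp_eq_exp, Complex.neg_re] at this
  linarith

lemma sinh_scalingExponent_sub_one_ne_zero {t : ℝ} (ht : 0 < t) {n : ℕ} {β : ℂ} (hn : 2 ≤ n)
    (hβ : -2 / (n : ℝ) < β.re) : Complex.sinh (t / 2 * (scalingExponent β n - 1)) ≠ 0 := by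
  refine sinh_ne_zero_of_re_pos ?_
  have : (t / 2 : ℂ) = ((t / 2 : ℝ) : ℂ) := by push_cast; rfl
  rw [this, Complex.re_ofReal_mul, Complex.sub_re, Complex.one_re]
  exact mul_pos (by positivity) (sub_pos.2 (one_lt_re_scalingExponent hn hβ))

lemma rho_eq_sinh_div_sinh {n k : ℕ} (hk : k ≤ n) (hn : n ≠ 0) {t : ℝ} (ht : t ≠ 0) (β : ℂ) :
    rho n k t β = Complex.sinh (t / 2 * (scalingExponent β (n - k) - scalingExponent β k + 1)) /
      Complex.sinh (t / 2 * (scalingExponent β n - 1)) := by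
  rw [rho, if_neg ht, ← scalingExponent_mul_one_sub hk hn, scalingExponent]

lemma F_eq_sum_rho {n : ℕ} (hn : 2 ≤ n) (t : ℝ) (β : ℂ) :
    F n t β = ∑ k ∈ Finset.Ico 1 n, (k / n : ℂ) * rho n k t β * F (n - k) t β * F k t β := by
  obtain ⟨m, rfl⟩ := Nat.exists_eq_add_of_le' hn
  rw [F, Finset.sum_attach (Finset.Icc 1 (m + 1)) fun k =>
    (k / (m + 2) : ℂ) * rho (m + 2) k t β * F (m + 2 - k) t β * F k t β,
    ← Finset.Ico_add_one_right_eq_Icc]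
  push_cast
  rfl

lemma sum_sinh_mul_eq_zero_iff {Φ : ℕ → ℂ} (h0 : Φ 0 = 1) {n : ℕ} (hn : n ≠ 0) {t : ℝ}
    (ht : t ≠ 0) {β : ℂ} (hs : Complex.sinh (t / 2 * (scalingExponent β n - 1)) ≠ 0) :
    ∑ k ∈ Finset.range (n + 1), (k : ℂ) *
        Complex.sinh (t / 2 * (scalingExponent β (n - k) - scalingExponent β k + 1)) *
          (Φ (n - k) * Φ k) = 0 ↔
      Φ n = ∑ k ∈ Finset.Ico 1 n, (k / n : ℂ) * rho n k t β * Φ (n - k) * Φ k := by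
  have hn' : (n : ℂ) ≠ 0 := Nat.cast_ne_zero.2 hn
  set s := Complex.sinh (t / 2 * (scalingExponent β n - 1)) with hs_def
  have last : Complex.sinh (t / 2 * (scalingExponent β 0 - scalingExponent β n + 1)) = -s := by
    rw [hs_def, ← Complex.sinh_neg, scalingExponent_zero]
    ring_nf
  have middle : ∑ k ∈ Finset.Ico 1 n, (k / n : ℂ) * rho n k t β * Φ (n - k) * Φ k =
      (∑ k ∈ Finset.Ico 1 n, (k : ℂ) *
        Complex.sinh (t / 2 * (scalingExponent β (n - k) - scalingExponent β k + 1)) *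
          (Φ (n - k) * Φ k)) / (n * s) := by
    rw [Finset.sum_div]
    refine Finset.sum_congr rfl fun k hk => ?_
    rw [rho_eq_sinh_div_sinh (Finset.mem_Ico.1 hk).2.le hn ht, ← hs_def]
    field_simp
  rw [Finset.sum_range_succ, Finset.range_eq_Ico,
    Finset.sum_eq_sum_Ico_succ_bot (Nat.pos_of_ne_zero hn), Nat.sub_self, last, h0, middle,
    eq_div_iff (mul_ne_zero hn' hs), Nat.cast_zero, zero_mul, zero_mul, zero_add]
  constructor <;> intro h <;> linear_combination -h

lemma eq_F_of_sum_sinh_mul_eq_zero {Φ : ℕ → ℂ} (h0 : Φ 0 = 1) (h1 : Φ 1 = 1) {t : ℝ} (ht : 0 < t)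
    {β : ℂ} {n : ℕ} (hβ : -2 / (n : ℝ) < β.re)
    (h : ∀ m ≤ n, ∑ k ∈ Finset.range (m + 1), (k : ℂ) *
      Complex.sinh (t / 2 * (scalingExponent β (m - k) - scalingExponent β k + 1)) *
        (Φ (m - k) * Φ k) = 0) {m : ℕ} (hm : m ≤ n) :
    Φ m = F m t β := by
  induction m using Nat.strong_induction_on with
  | _ m ih =>
    rcases Nat.lt_or_ge m 2 with hm2 | hm2
    · interval_cases m
      · rw [h0, F]
      · rw [h1, F]
    · have hβm := neg_two_div_lt_of_le hβ (by omega) hm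
      rw [(sum_sinh_mul_eq_zero_iff h0 (by omega) ht.ne'
        (sinh_scalingExponent_sub_one_ne_zero ht hm2 hβm)).1 (h m hm), F_eq_sum_rho hm2]
      refine Finset.sum_congr rfl fun k hk => ?_
      obtain ⟨hk1, hkm⟩ := Finset.mem_Ico.1 hk
      rw [ih k hkm (by omega), ih (m - k) (by omega) (by omega)]

end Recurrence

/-! ### Log gases with scaling factor `q` -/

section LogGas

open PowerSeries

variable {q : ℕ}

lemma natCast_cpow_eq_exp (hq : q ≠ 0) (z : ℂ) : (q : ℂ) ^ z = Complex.exp (Real.log q * z) := by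
  rw [Complex.cpow_def_of_ne_zero (Nat.cast_ne_zero.2 hq), Complex.natCast_log]

lemma two_mul_sinh_half_log_mul (hq : q ≠ 0) (z : ℂ) :
    2 * Complex.sinh (Real.log q / 2 * z) = (q : ℂ) ^ (z / 2) - (q : ℂ) ^ (-(z / 2)) := by
  rw [Complex.two_sinh, natCast_cpow_eq_exp hq, natCast_cpow_eq_exp hq]
  ring_nf

lemma two_mul_cosh_half_log_mul (hq : q ≠ 0) (z : ℂ) :
    2 * Complex.cosh (Real.log q / 2 * z) = (q : ℂ) ^ (z / 2) + (q : ℂ) ^ (-(z / 2)) := by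
  rw [Complex.two_cosh, natCast_cpow_eq_exp hq, natCast_cpow_eq_exp hq]
  ring_nf

lemma div_add_one_mul_cpow_neg_half (hq : q ≠ 0) :
    (q / (q + 1) : ℂ) * (q : ℂ) ^ (-(1 / 2) : ℂ) = (2 * Complex.cosh (Real.log q / 2))⁻¹ := by
  have hq' : (q : ℂ) ≠ 0 := Nat.cast_ne_zero.2 hq
  have sqrt_mul_sqrt : (q : ℂ) ^ (1 / 2 : ℂ) * (q : ℂ) ^ (1 / 2 : ℂ) = q := by
    rw [← Complex.cpow_add _ _ hq', add_halves, Complex.cpow_one]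
  have cosh_eq := two_mul_cosh_half_log_mul hq 1
  have : (q : ℂ) + 1 ≠ 0 := Nat.cast_add_one_ne_zero q
  have sqrt_ne_zero : (q : ℂ) ^ (1 / 2 : ℂ) ≠ 0 := left_ne_zero_of_mul (sqrt_mul_sqrt ▸ hq')
  rw [mul_one] at cosh_eq
  rw [cosh_eq, Complex.cpow_neg]
  refine eq_inv_of_mul_eq_one_left ?_
  field_simp
  linear_combination -sqrt_mul_sqrt

lemma mul_inv_pow_mul_max_norm_lt_one (hq : 2 ≤ q) {n : ℕ} (hn : 2 ≤ n) {β : ℂ}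
    (hβ : -2 / (n : ℝ) < β.re) :
    (q : NNReal) * ((q : NNReal)⁻¹ ^ n * max 1 (‖(q : ℂ) ^ (-β)‖₊ ^ n.choose 2)) < 1 := by
  have one_lt : (1 : ℝ) < q := mod_cast hq
  have pos : (0 : ℝ) < q := one_pos.trans one_lt
  have two_le : (2 : ℝ) ≤ n := mod_cast hn
  have norm_pow : ‖(q : ℂ) ^ (-β)‖ ^ n.choose 2 = (q : ℝ) ^ (-β.re * (n * (n - 1) / 2)) := by
    rw [Complex.norm_natCast_cpow_of_pos (by omega), Complex.neg_re, ← Real.rpow_natCast,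
      ← Real.rpow_mul pos.le, Nat.cast_choose_two]
  have max_lt : max 1 (‖(q : ℂ) ^ (-β)‖ ^ n.choose 2) < (q : ℝ) ^ ((n : ℝ) - 1) := by
    refine max_lt (Real.one_lt_rpow one_lt (by linarith)) ?_
    rw [norm_pow]
    refine Real.rpow_lt_rpow_of_exponent_lt one_lt ?_
    rw [div_lt_iff₀ (by linarith)] at hβ
    nlinarith
  rw [← NNReal.coe_lt_coe]
  push_cast
  calc (q : ℝ) * ((q : ℝ)⁻¹ ^ n * max 1 (‖(q : ℂ) ^ (-β)‖ ^ n.choose 2))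
      < (q : ℝ) * ((q : ℝ)⁻¹ ^ n * (q : ℝ) ^ ((n : ℝ) - 1)) := by gcongr
    _ = 1 := by
      rw [Real.rpow_sub pos, Real.rpow_natCast, Real.rpow_one, inv_pow]
      field_simp

/-- The coefficients of a grand canonical partition function, normalised so as to satisfy the
recurrence defining `F`. -/
noncomputable def normalizedCoeff (q : ℕ) (β : ℂ) (Z : PowerSeries ℂ) (n : ℕ) : ℂ :=
  (q : ℂ) ^ (-((scalingExponent β n - n) / 2)) * coeff n Z

variable {β : ℂ} {Z : PowerSeries ℂ}

lemma normalizedCoeff_of_le_one {n : ℕ} (hn : n ≤ 1) :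
    normalizedCoeff q β Z n = coeff n Z := by
  interval_cases n <;> simp [normalizedCoeff, scalingExponent]

lemma coeff_eq_mul_normalizedCoeff (hq : q ≠ 0) (n : ℕ) :
    coeff n Z = (q : ℂ) ^ ((scalingExponent β n - n) / 2) * normalizedCoeff q β Z n := by
  have hq' : (q : ℂ) ≠ 0 := Nat.cast_ne_zero.2 hq
  rw [normalizedCoeff, ← mul_assoc, ← Complex.cpow_add _ _ hq', add_neg_cancel, Complex.cpow_zero,
    one_mul]

lemma coeff_cellSeries (hq : q ≠ 0) (n : ℕ) :
    coeff n (cellSeries q ((q : ℂ) ^ (-β)) Z) =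
      (q : ℂ) ^ (-((scalingExponent β n + n) / 2)) * normalizedCoeff q β Z n := by
  have hq' : (q : ℂ) ≠ 0 := Nat.cast_ne_zero.2 hq
  rw [cellSeries, coeff_mk, coeff_eq_mul_normalizedCoeff (β := β) hq, ← Complex.cpow_nat_mul,
    ← Complex.cpow_neg_one, ← Complex.cpow_nat_mul, ← mul_assoc, ← Complex.cpow_add _ _ hq',
    ← Complex.cpow_add _ _ hq', scalingExponent]
  ring_nf

lemma coeff_mul_coeff_cellSeries (hq : q ≠ 0) {n k : ℕ} (hk : k ≤ n) :
    coeff k Z * coeff (n - k) (cellSeries q ((q : ℂ) ^ (-β)) Z) =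
      (q : ℂ) ^ (-(n / 2) : ℂ) *
        (q : ℂ) ^ (-((scalingExponent β (n - k) - scalingExponent β k) / 2)) *
          (normalizedCoeff q β Z (n - k) * normalizedCoeff q β Z k) := by
  have hq' : (q : ℂ) ≠ 0 := Nat.cast_ne_zero.2 hq
  rw [coeff_eq_mul_normalizedCoeff (β := β) hq, coeff_cellSeries hq, mul_mul_mul_comm,
    ← Complex.cpow_add _ _ hq', ← Complex.cpow_add _ _ hq', Nat.cast_sub hk,
    mul_comm (normalizedCoeff q β Z k)]
  ring_nf

lemma coeff_cellSeries_mul_coeff (hq : q ≠ 0) {n k : ℕ} (hk : k ≤ n) :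
    coeff k (cellSeries q ((q : ℂ) ^ (-β)) Z) * coeff (n - k) Z =
      (q : ℂ) ^ (-(n / 2) : ℂ) *
        (q : ℂ) ^ ((scalingExponent β (n - k) - scalingExponent β k) / 2) *
          (normalizedCoeff q β Z (n - k) * normalizedCoeff q β Z k) := by
  have swapped := coeff_mul_coeff_cellSeries (β := β) (Z := Z) hq (Nat.sub_le n k)
  rw [Nat.sub_sub_self hk] at swapped
  rw [mul_comm, swapped, mul_comm (normalizedCoeff q β Z k),
    ← neg_sub (scalingExponent β (n - k)), neg_div, neg_neg]

lemma sum_sinh_mul_normalizedCoeff (hq : q ≠ 0) {n : ℕ}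
    (hZ : ∀ k ≤ n, coeff k Z = coeff k (cellSeries q ((q : ℂ) ^ (-β)) Z ^ q)) :
    ∑ k ∈ Finset.range (n + 1), (k : ℂ) *
      Complex.sinh (Real.log q / 2 * (scalingExponent β (n - k) - scalingExponent β k + 1)) *
        (normalizedCoeff q β Z (n - k) * normalizedCoeff q β Z k) = 0 := by
  have hq' : (q : ℂ) ≠ 0 := Nat.cast_ne_zero.2 hq
  have weighted := sum_natCast_mul_coeff_mul hZ
  have scale_ne_zero : 2 * (q : ℂ) ^ ((1 / 2 : ℂ) - n / 2) ≠ 0 :=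
    mul_ne_zero two_ne_zero (by simp [Complex.cpow_eq_zero_iff, hq'])
  refine mul_left_cancel₀ scale_ne_zero ?_
  rw [mul_zero, ← sub_eq_zero.2 weighted.symm, Finset.mul_sum, Finset.mul_sum,
    ← Finset.sum_sub_distrib]
  refine Finset.sum_congr rfl fun k hk => ?_
  have hk := Finset.mem_range_succ_iff.1 hk
  rw [coeff_mul_coeff_cellSeries hq hk, coeff_cellSeries_mul_coeff hq hk]
  have sinh_eq := two_mul_sinh_half_log_mul hq
    (scalingExponent β (n - k) - scalingExponent β k + 1)
  set e := scalingExponent β (n - k) - scalingExponent β k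
  have raise : (q : ℂ) * ((q : ℂ) ^ (-(n / 2) : ℂ) * (q : ℂ) ^ (e / 2)) =
      (q : ℂ) ^ ((1 / 2 : ℂ) - n / 2) * (q : ℂ) ^ ((e + 1) / 2) := by
    conv_lhs => enter [1]; rw [← Complex.cpow_one (q : ℂ)]
    simp only [← Complex.cpow_add _ _ hq']
    ring_nf
  have lower : (q : ℂ) ^ (-(n / 2) : ℂ) * (q : ℂ) ^ (-(e / 2)) =
      (q : ℂ) ^ ((1 / 2 : ℂ) - n / 2) * (q : ℂ) ^ (-((e + 1) / 2)) := by
    simp only [← Complex.cpow_add _ _ hq']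
    ring_nf
  linear_combination (k : ℂ) * (normalizedCoeff q β Z (n - k) * normalizedCoeff q β Z k) *
    ((q : ℂ) ^ ((1 / 2 : ℂ) - n / 2) * sinh_eq - raise + lower)

lemma normalizedCoeff_eq_F (hq : 2 ≤ q) (h0 : coeff 0 Z = 1) (h1 : coeff 1 Z = 1) {n : ℕ}
    (hβ : -2 / (n : ℝ) < β.re)
    (hZ : ∀ k ≤ n, coeff k Z = coeff k (cellSeries q ((q : ℂ) ^ (-β)) Z ^ q)) {m : ℕ}
    (hm : m ≤ n) : normalizedCoeff q β Z m = F m (Real.log q) β :=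
  eq_F_of_sum_sinh_mul_eq_zero ((normalizedCoeff_of_le_one zero_le_one).trans h0)
    ((normalizedCoeff_of_le_one le_rfl).trans h1) (Real.log_pos (mod_cast hq)) hβ
    (fun _ hl => sum_sinh_mul_normalizedCoeff (by omega) fun k hk => hZ k (hk.trans hl)) hm

lemma coeff_mul_cellSeries (hq : q ≠ 0) (n : ℕ) :
    coeff n (Z * cellSeries q ((q : ℂ) ^ (-β)) Z) =
      (q : ℂ) ^ (-(n / 2) : ℂ) * ∑ k ∈ Finset.range (n + 1),
        Complex.cosh (Real.log q / 2 * (scalingExponent β (n - k) - scalingExponent β k)) *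
          (normalizedCoeff q β Z (n - k) * normalizedCoeff q β Z k) := by
  have expand := coeff_mul n Z (cellSeries q ((q : ℂ) ^ (-β)) Z)
  have expand_swap := coeff_mul n (cellSeries q ((q : ℂ) ^ (-β)) Z) Z
  rw [Finset.Nat.sum_antidiagonal_eq_sum_range_succ_mk] at expand expand_swap
  rw [mul_comm (cellSeries q _ Z)] at expand_swap
  rw [← mul_right_inj' two_ne_zero, two_mul]
  nth_rw 1 [expand]
  rw [expand_swap, ← Finset.sum_add_distrib, mul_left_comm, Finset.mul_sum, Finset.mul_sum]
  refine Finset.sum_congr rfl fun k hk => ?_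
  have hk := Finset.mem_range_succ_iff.1 hk
  rw [coeff_mul_coeff_cellSeries hq hk, coeff_cellSeries_mul_coeff hq hk, ← mul_assoc (2 : ℂ),
    two_mul_cosh_half_log_mul hq]
  ring

end LogGas

/-! ### The `p`-adic integers -/

section Haar

lemma exists_isAddHaarMeasure_isProbabilityMeasure (G : Type*) [AddGroup G] [TopologicalSpace G]
    [IsTopologicalAddGroup G] [CompactSpace G] [MeasurableSpace G] [BorelSpace G] :
    ∃ μ : Measure G, μ.IsAddHaarMeasure ∧ IsProbabilityMeasure μ :=
  ⟨.addHaarMeasure ⊤, inferInstance, ⟨Measure.addHaarMeasure_self⟩⟩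

variable {G Y : Type*} [AddGroup G] [TopologicalSpace G] [IsTopologicalAddGroup G] [CompactSpace G]
  [SecondCountableTopology G] [MeasurableSpace G] [BorelSpace G] [MeasurableSpace Y]
  (μ : Measure G) [μ.IsAddHaarMeasure] [IsProbabilityMeasure μ]

lemma eq_smul_haar_of_isAddLeftInvariant (ρ : Measure G) [IsFiniteMeasure ρ]
    [ρ.IsAddLeftInvariant] : ρ = (ρ Set.univ).toNNReal • μ := by
  have eq_smul := Measure.isAddLeftInvariant_eq_smul ρ μ
  have mass : ρ Set.univ = ρ.addHaarScalarFactor μ := by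
    conv_lhs => rw [eq_smul]
    rw [Measure.smul_apply, measure_univ, ENNReal.smul_def, smul_eq_mul, mul_one]
  rw [mass, ENNReal.toNNReal_coe]
  exact eq_smul

lemma comap_eq_smul_haar {ν : Measure Y} [IsFiniteMeasure ν] {f : G → Y}
    (hf : MeasurableEmbedding f)
    (hν : ∀ g s, MeasurableSet s → ν (f '' ((g + ·) '' s)) = ν (f '' s)) :
    ν.comap f = (ν (Set.range f)).toNNReal • μ := by
  have : (ν.comap f).IsAddLeftInvariant := by
    refine ⟨fun g => Measure.ext fun s hs => ?_⟩
    have image_preimage : (g + ·) '' ((g + ·) ⁻¹' s) = s :=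
      Set.image_preimage_eq s (AddGroup.addLeft_bijective g).surjective
    rw [Measure.map_apply (measurable_const_add g) hs, hf.comap_apply, hf.comap_apply,
      ← hν g _ (measurable_const_add g hs), image_preimage]
  have : IsFiniteMeasure (ν.comap f) := ⟨by rw [hf.comap_apply]; exact measure_lt_top _ _⟩
  rw [eq_smul_haar_of_isAddLeftInvariant μ (ν.comap f), hf.comap_apply, Set.image_univ]

end Haar

lemma eq_sum_map_comap {α X Y : Type*} [Fintype α] [MeasurableSpace X] [MeasurableSpace Y]
    {S : α → X → Y} (hS : ∀ a, MeasurableEmbedding (S a))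
    (hdisj : Pairwise (Function.onFun Disjoint fun a => Set.range (S a)))
    (hcover : ⋃ a, Set.range (S a) = Set.univ) (μ : Measure Y) :
    μ = ∑ a, (μ.comap (S a)).map (S a) := by
  simp_rw [fun a => (hS a).map_comap]
  rw [← Measure.sum_fintype, ← Measure.restrict_iUnion hdisj fun a => (hS a).measurableSet_range,
    hcover, Measure.restrict_univ]

/-- The pair weight `d(x, y) ^ β` of a log gas at inverse temperature `β`. -/
noncomputable def coulombWeight {X : Type*} (d : X → X → ℝ) (β : ℂ) (x y : X) : ℂ :=
  (d x y : ℂ) ^ β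

lemma coulombWeight_of_eq_mul {X Y : Type*} {d : X → X → ℝ} {d' : Y → Y → ℝ} {c : ℝ} {x y : X}
    {x' y' : Y} (h : d x y = c * d' x' y') (hc : 0 ≤ c) (hd' : 0 ≤ d' x' y') (β : ℂ) :
    coulombWeight d β x y = (c : ℂ) ^ β * coulombWeight d' β x' y' := by
  rw [coulombWeight, coulombWeight, h, Complex.ofReal_mul, Complex.mul_cpow_ofReal_nonneg hc hd']

lemma coulombWeight_of_eq_one {X : Type*} {d : X → X → ℝ} {x y : X} (h : d x y = 1) (β : ℂ) :
    coulombWeight d β x y = 1 := by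
  rw [coulombWeight, h, Complex.ofReal_one, Complex.one_cpow]

lemma ofReal_inv_natCast_cpow (n : ℕ) (β : ℂ) :
    (((n : ℝ)⁻¹ : ℝ) : ℂ) ^ β = (n : ℂ) ^ (-β) := by
  rw [Complex.ofReal_inv, Complex.ofReal_natCast, Complex.cpow_neg, Complex.inv_cpow]
  rw [Complex.natCast_arg]
  exact Real.pi_pos.ne

section PadicInt

noncomputable instance (p : ℕ) [Fact p.Prime] : MeasurableSpace ℤ_[p] := borel _
instance (p : ℕ) [Fact p.Prime] : BorelSpace ℤ_[p] := ⟨rfl⟩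

variable {p : ℕ} [Fact p.Prime]

/-- The affine embedding `x ↦ a + p x` of `ℤ_p` onto the residue class of `a`. -/
noncomputable def residueMap (a : ZMod p) (x : ℤ_[p]) : ℤ_[p] := a.val + p * x

lemma toZMod_residueMap (a : ZMod p) (x : ℤ_[p]) : PadicInt.toZMod (residueMap a x) = a := by
  simp [residueMap]

lemma residueMap_zero (x : ℤ_[p]) : residueMap 0 x = p * x := by simp [residueMap]

lemma dist_residueMap (a : ZMod p) (x y : ℤ_[p]) :
    dist (residueMap a x) (residueMap a y) = (p : ℝ)⁻¹ * dist x y := by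
  rw [dist_eq_norm, residueMap, residueMap, add_sub_add_left_eq_sub, ← mul_sub, norm_mul,
    PadicInt.norm_p, dist_eq_norm]

lemma norm_sub_lt_one_iff_toZMod_eq (x y : ℤ_[p]) :
    ‖x - y‖ < 1 ↔ PadicInt.toZMod x = PadicInt.toZMod y := by
  rw [← PadicInt.mem_nonunits, ← IsLocalRing.mem_maximalIdeal, ← PadicInt.ker_toZMod,
    RingHom.mem_ker, map_sub, sub_eq_zero]

lemma dist_eq_one_of_toZMod_ne {x y : ℤ_[p]} (h : PadicInt.toZMod x ≠ PadicInt.toZMod y) :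
    dist x y = 1 := by
  rw [dist_eq_norm]
  exact (PadicInt.norm_le_one _).antisymm
    (not_lt.1 fun hlt => h ((norm_sub_lt_one_iff_toZMod_eq x y).1 hlt))

lemma range_residueMap (a : ZMod p) :
    Set.range (residueMap a) = {x | PadicInt.toZMod x = a} := by
  ext x
  refine ⟨fun ⟨y, hy⟩ => hy ▸ toZMod_residueMap a y, fun hx => ?_⟩
  have : ‖x - (a.val : ℤ_[p])‖ < 1 := by
    rw [norm_sub_lt_one_iff_toZMod_eq, map_natCast, ZMod.natCast_zmod_val]
    exact hx
  obtain ⟨y, hy⟩ := (PadicInt.norm_lt_one_iff_dvd _).1 this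
  exact ⟨y, by rw [residueMap, ← hy, add_sub_cancel]⟩

lemma measurableEmbedding_residueMap (a : ZMod p) : MeasurableEmbedding (residueMap a) := by
  have continuous : Continuous (residueMap a) := by unfold residueMap; fun_prop
  refine (continuous.isClosedEmbedding fun x y h => ?_).measurableEmbedding
  have := dist_residueMap a x y
  rw [h, dist_self, eq_comm, mul_eq_zero, dist_eq_zero] at this
  exact this.resolve_left (inv_ne_zero (NeZero.ne _))

lemma pairwise_disjoint_range_residueMap :
    Pairwise (Function.onFun Disjoint fun a : ZMod p => Set.range (residueMap a)) := by
  intro a b hab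
  rw [Function.onFun, range_residueMap, range_residueMap]
  exact Set.disjoint_left.2 fun x hxa hxb => hab (hxa.symm.trans hxb)

lemma iUnion_range_residueMap : ⋃ a : ZMod p, Set.range (residueMap a) = Set.univ :=
  Set.eq_univ_of_forall fun x => Set.mem_iUnion.2 ⟨PadicInt.toZMod x, by rw [range_residueMap]; rfl⟩

variable (μ : Measure ℤ_[p]) [μ.IsAddHaarMeasure] [IsProbabilityMeasure μ]

lemma measure_range_residueMap (a : ZMod p) : μ (Set.range (residueMap a)) = (p : ENNReal)⁻¹ := by
  have eq_zero_class (b : ZMod p) :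
      μ (Set.range (residueMap b)) = μ (Set.range (residueMap (0 : ZMod p))) := by
    have : Set.range (residueMap b) = ((b.val : ℤ_[p]) + ·) '' Set.range (residueMap 0) := by
      rw [← Set.range_comp]
      exact congrArg _ (funext fun x => by rw [Function.comp_apply, residueMap_zero, residueMap])
    rw [this, Set.image_add_left, measure_preimage_add]
  have total : ∑ b : ZMod p, μ (Set.range (residueMap b)) = 1 := by
    rw [← tsum_fintype (L := .unconditional _), ← measure_iUnion pairwise_disjoint_range_residueMap
      fun b => (measurableEmbedding_residueMap b).measurableSet_range, iUnion_range_residueMap,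
      measure_univ]
  simp_rw [eq_zero_class, Finset.sum_const, Finset.card_univ, ZMod.card, nsmul_eq_mul] at total
  rw [eq_zero_class, ENNReal.eq_inv_of_mul_eq_one_left ((mul_comm _ _).trans total)]

lemma comap_residueMap (a : ZMod p) : μ.comap (residueMap a) = (p : NNReal)⁻¹ • μ := by
  rw [comap_eq_smul_haar μ (measurableEmbedding_residueMap a) fun g s _ => ?_,
    measure_range_residueMap]
  · simp
  · have : residueMap a ∘ (g + ·) = (p * g + ·) ∘ residueMap a :=
      funext fun x => by simp only [Function.comp_apply, residueMap]; ring
    rw [← Set.image_comp, this, Set.image_comp, Set.image_add_left, measure_preimage_add]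

lemma selfSimilar_coulombWeight_dist (β : ℂ) :
    SelfSimilar (coulombWeight (dist : ℤ_[p] → ℤ_[p] → ℝ) β) μ residueMap ((p : ℂ) ^ (-β)) where
  measurableEmbedding := measurableEmbedding_residueMap
  eq_sum_map := by
    conv_lhs => rw [eq_sum_map_comap measurableEmbedding_residueMap
      pairwise_disjoint_range_residueMap iUnion_range_residueMap μ]
    simp_rw [comap_residueMap, ZMod.card, Measure.map_smul]
  scale a x y := by
    rw [← ofReal_inv_natCast_cpow]
    exact coulombWeight_of_eq_mul (dist_residueMap a x y) (by positivity) dist_nonneg β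
  eq_one a b hab x y := by
    refine coulombWeight_of_eq_one (dist_eq_one_of_toZMod_ne ?_) β
    rwa [toZMod_residueMap, toZMod_residueMap]

lemma pairIntegrable_coulombWeight_dist {n k : ℕ} {β : ℂ} (hβ : -2 / (n : ℝ) < β.re)
    (hk : k ≤ n) : PairIntegrable (coulombWeight (dist : ℤ_[p] → ℤ_[p] → ℝ) β) μ k := by
  have measurable_weight :
      Measurable (Function.uncurry (coulombWeight (dist : ℤ_[p] → ℤ_[p] → ℝ) β)) :=
    (Complex.measurable_ofReal.comp continuous_dist.measurable).pow_const β
  refine (selfSimilar_coulombWeight_dist μ β).pairIntegrable measurable_weight fun m hm hmk => ?_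
  rw [ZMod.card]
  exact mul_inv_pow_mul_max_norm_lt_one (Fact.out : p.Prime).two_le hm
    (neg_two_div_lt_of_le hβ (by omega) (hmk.trans hk))

end PadicInt

/-! ### The projective line -/

section ProjectiveLine

variable {p : ℕ} [Fact p.Prime]

lemma sdelta_smul {a b : ℚ_[p]} (ha : a ≠ 0) (hb : b ≠ 0) (v w : Fin 2 → ℚ_[p]) :
    sdelta p (a • v) (b • w) = sdelta p v w := by
  have numerator : ‖a * v 0 * (b * w 1) - a * v 1 * (b * w 0)‖
      = ‖a‖ * ‖b‖ * ‖v 0 * w 1 - v 1 * w 0‖ := by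
    rw [← norm_mul, ← norm_mul]; ring_nf
  have max_norm (c : ℚ_[p]) (u : Fin 2 → ℚ_[p]) :
      max ‖c * u 0‖ ‖c * u 1‖ = ‖c‖ * max ‖u 0‖ ‖u 1‖ := by
    rw [norm_mul, norm_mul, mul_max_of_nonneg _ _ (norm_nonneg c)]
  simp only [sdelta, Pi.smul_apply, smul_eq_mul, numerator, max_norm]
  rw [mul_mul_mul_comm, mul_div_mul_left _ _ (mul_ne_zero (norm_ne_zero_iff.2 ha)
    (norm_ne_zero_iff.2 hb))]

lemma pdelta_mk {v w : Fin 2 → ℚ_[p]} (hv : v ≠ 0) (hw : w ≠ 0) :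
    pdelta p (.mk ℚ_[p] v hv) (.mk ℚ_[p] w hw) = sdelta p v w := by
  obtain ⟨a, ha⟩ := Projectivization.exists_smul_eq_mk_rep ℚ_[p] v hv
  obtain ⟨b, hb⟩ := Projectivization.exists_smul_eq_mk_rep ℚ_[p] w hw
  rw [pdelta, ← ha, ← hb]
  exact sdelta_smul a.ne_zero b.ne_zero v w

lemma mobius_mk {A : Matrix (Fin 2) (Fin 2) ℚ_[p]} {v : Fin 2 → ℚ_[p]} (hv : v ≠ 0)
    (hAv : A.mulVec v ≠ 0) : mobius p A (.mk ℚ_[p] v hv) = .mk ℚ_[p] (A.mulVec v) hAv := by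
  obtain ⟨a, ha⟩ := Projectivization.exists_smul_eq_mk_rep ℚ_[p] v hv
  have mulVec_rep : A.mulVec (Projectivization.mk ℚ_[p] v hv).rep = a • A.mulVec v := by
    rw [← ha, Matrix.mulVec_smul]
  have rep_ne_zero : A.mulVec (Projectivization.mk ℚ_[p] v hv).rep ≠ 0 := by
    rw [mulVec_rep]; exact (smul_ne_zero_iff_ne a).2 hAv
  rw [mobius, dif_pos rep_ne_zero, Projectivization.mk_eq_mk_iff]
  exact ⟨a, mulVec_rep.symm⟩

lemma isQuotientMap_mk :
    Topology.IsQuotientMap fun v : {v : Fin 2 → ℚ_[p] // v ≠ 0} =>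
      (Projectivization.mk ℚ_[p] v.1 v.2 : P1 p) :=
  isQuotientMap_quot_mk

lemma continuous_mk {Z : Type*} [TopologicalSpace Z] {f : Z → Fin 2 → ℚ_[p]} (hf : Continuous f)
    (hf0 : ∀ z, f z ≠ 0) : Continuous fun z => (Projectivization.mk ℚ_[p] (f z) (hf0 z) : P1 p) :=
  isQuotientMap_mk.continuous.comp (hf.subtype_mk hf0)

lemma max_norm_pos {E : Type*} [NormedAddCommGroup E] {v : Fin 2 → E} (hv : v ≠ 0) :
    0 < max ‖v 0‖ ‖v 1‖ := by
  by_contra! h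
  refine hv (funext fun i => norm_le_zero_iff.1 (le_trans ?_ h))
  fin_cases i
  exacts [le_max_left _ _, le_max_right _ _]

lemma mk_eq_mk_of_cross_mul_eq {K : Type*} [Field K] {v w : Fin 2 → K} (hv : v ≠ 0) (hw : w ≠ 0)
    (h : v 0 * w 1 = v 1 * w 0) : Projectivization.mk K v hv = .mk K w hw := by
  rw [Projectivization.mk_eq_mk_iff']
  obtain ⟨i, hi⟩ := Function.ne_iff.1 hw
  have hi : w i ≠ 0 := hi
  refine ⟨v i / w i, funext fun j => ?_⟩
  rw [Pi.smul_apply, smul_eq_mul, div_mul_eq_mul_div, div_eq_iff hi]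
  fin_cases i <;> fin_cases j <;> first | rfl | exact h | exact h.symm

lemma pdelta_self (ξ : P1 p) : pdelta p ξ ξ = 0 := by
  rw [pdelta, sdelta, mul_comm (ξ.rep 0), sub_self, norm_zero, zero_div]

lemma pdelta_comm (ξ η : P1 p) : pdelta p ξ η = pdelta p η ξ := by
  rw [pdelta, pdelta, sdelta, sdelta, norm_sub_rev, mul_comm (ξ.rep 1), mul_comm (ξ.rep 0),
    mul_comm (max _ _)]

lemma eq_of_pdelta_eq_zero {ξ η : P1 p} (h : pdelta p ξ η = 0) : ξ = η := by
  rw [pdelta, sdelta, div_eq_zero_iff, norm_eq_zero, sub_eq_zero, or_iff_left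
    (mul_pos (max_norm_pos ξ.rep_nonzero) (max_norm_pos η.rep_nonzero)).ne'] at h
  rw [← ξ.mk_rep, ← η.mk_rep]
  exact mk_eq_mk_of_cross_mul_eq _ _ h

lemma continuous_pdelta_left (η : P1 p) : Continuous fun ξ => pdelta p ξ η := by
  have pdelta_comp_mk (v : {v : Fin 2 → ℚ_[p] // v ≠ 0}) :
      pdelta p (.mk ℚ_[p] v.1 v.2) η = sdelta p v η.rep := by
    conv_lhs => rw [← η.mk_rep]
    exact pdelta_mk v.2 η.rep_nonzero
  simp_rw [isQuotientMap_mk.continuous_iff, Function.comp_def, pdelta_comp_mk, sdelta]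
  have continuous_coe_zero : Continuous fun v : {v : Fin 2 → ℚ_[p] // v ≠ 0} => v.1 0 :=
    (continuous_apply 0).comp continuous_subtype_val
  have continuous_coe_one : Continuous fun v : {v : Fin 2 → ℚ_[p] // v ≠ 0} => v.1 1 :=
    (continuous_apply 1).comp continuous_subtype_val
  exact .div₀
    ((continuous_coe_zero.mul_const _).sub (continuous_coe_one.mul_const _)).norm
    ((continuous_coe_zero.norm.max continuous_coe_one.norm).mul_const _)
    fun v => (mul_pos (max_norm_pos v.2) (max_norm_pos η.rep_nonzero)).ne'

instance : T2Space (P1 p) :=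
  .of_injective_continuous (f := fun ξ η => pdelta p ξ η)
    (fun _ η h => eq_of_pdelta_eq_zero ((congrFun h η).trans (pdelta_self η)))
    (continuous_pi continuous_pdelta_left)

/-- The embedding `x ↦ [x : 1]` of `ℤ_p` onto the closed unit ball about `[0 : 1]`. -/
noncomputable def zeroChart (x : ℤ_[p]) : P1 p :=
  .mk ℚ_[p] ![x, 1] fun h => one_ne_zero (congrFun h 1)

/-- The embedding `x ↦ [1 : p x]` of `ℤ_p` onto the open unit ball about `∞ = [1 : 0]`. -/
noncomputable def inftyChart (x : ℤ_[p]) : P1 p :=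
  .mk ℚ_[p] ![1, p * x] fun h => one_ne_zero (congrFun h 0)

lemma pdelta_mk_of_max_norm_eq_one {v w : Fin 2 → ℚ_[p]} (hv : v ≠ 0) (hw : w ≠ 0)
    (hv1 : max ‖v 0‖ ‖v 1‖ = 1) (hw1 : max ‖w 0‖ ‖w 1‖ = 1) :
    pdelta p (.mk ℚ_[p] v hv) (.mk ℚ_[p] w hw) = ‖v 0 * w 1 - v 1 * w 0‖ := by
  rw [pdelta_mk, sdelta, hv1, hw1, one_mul, div_one]

lemma max_norm_coe_one (x : ℤ_[p]) : max ‖(x : ℚ_[p])‖ ‖(1 : ℚ_[p])‖ = 1 := by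
  rw [norm_one]; exact max_eq_right x.2

lemma max_norm_one_natCast_mul (x : ℤ_[p]) : max ‖(1 : ℚ_[p])‖ ‖(p * x : ℚ_[p])‖ = 1 := by
  rw [max_comm, ← PadicInt.coe_natCast, ← PadicInt.coe_mul, max_norm_coe_one]

lemma pdelta_zeroChart (x y : ℤ_[p]) : pdelta p (zeroChart x) (zeroChart y) = dist x y := by
  rw [zeroChart, zeroChart,
    pdelta_mk_of_max_norm_eq_one _ _ (max_norm_coe_one x) (max_norm_coe_one y)]
  simp [dist_eq_norm, ← PadicInt.coe_sub]

lemma pdelta_inftyChart (x y : ℤ_[p]) :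
    pdelta p (inftyChart x) (inftyChart y) = (p : ℝ)⁻¹ * dist x y := by
  rw [inftyChart, inftyChart, pdelta_mk_of_max_norm_eq_one _ _ (max_norm_one_natCast_mul x)
    (max_norm_one_natCast_mul y), dist_comm]
  simp [dist_eq_norm, ← mul_sub, ← PadicInt.coe_sub]

lemma pdelta_zeroChart_inftyChart (x y : ℤ_[p]) :
    pdelta p (zeroChart x) (inftyChart y) = 1 := by
  calc
    pdelta p (zeroChart x) (inftyChart y) = ‖(x * (p * y) - 1 * 1 : ℚ_[p])‖ :=
      pdelta_mk_of_max_norm_eq_one _ _ (max_norm_coe_one x) (max_norm_one_natCast_mul y)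
    _ = ‖x * (p * y) - 1‖ := by rw [PadicInt.norm_def]; push_cast; rw [one_mul]
    _ = 1 := by
      rw [← dist_eq_norm]
      exact dist_eq_one_of_toZMod_ne (by simp)

lemma measurableEmbedding_zeroChart : MeasurableEmbedding (zeroChart (p := p)) := by
  have continuous_vec : Continuous fun x : ℤ_[p] => ![(x : ℚ_[p]), 1] :=
    .matrixVecCons continuous_subtype_val continuous_const
  have continuous : Continuous (zeroChart (p := p)) := continuous_mk continuous_vec _
  refine (continuous.isClosedEmbedding fun x y h => ?_).measurableEmbedding
  rw [← dist_eq_zero, ← pdelta_zeroChart, h, pdelta_self]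

lemma measurableEmbedding_inftyChart : MeasurableEmbedding (inftyChart (p := p)) := by
  have continuous_vec : Continuous fun x : ℤ_[p] => ![1, (p * x : ℚ_[p])] :=
    .matrixVecCons continuous_const
      (.matrixVecCons (continuous_subtype_val.const_mul _) continuous_const)
  have continuous : Continuous (inftyChart (p := p)) := continuous_mk continuous_vec _
  refine (continuous.isClosedEmbedding fun x y h => ?_).measurableEmbedding
  have := pdelta_inftyChart x y
  rw [h, pdelta_self, eq_comm, mul_eq_zero, dist_eq_zero] at this
  exact this.resolve_left (inv_ne_zero (NeZero.ne _))

lemma exists_zeroChart_or_inftyChart_eq (ξ : P1 p) :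
    (∃ x, zeroChart x = ξ) ∨ ∃ x, inftyChart x = ξ := by
  induction ξ using Projectivization.ind with | h v hv
  obtain hle | hlt := le_or_gt ‖v 0‖ ‖v 1‖
  · have v_one : v 1 ≠ 0 := norm_pos_iff.1 (max_eq_right hle ▸ max_norm_pos hv)
    have norm_le_one : ‖v 0 / v 1‖ ≤ 1 := by
      rw [norm_div]
      exact div_le_one_of_le₀ hle (norm_nonneg _)
    exact .inl ⟨⟨v 0 / v 1, norm_le_one⟩, mk_eq_mk_of_cross_mul_eq _ _ (by simp [v_one])⟩
  · have v_zero : v 0 ≠ 0 := norm_pos_iff.1 ((norm_nonneg _).trans_lt hlt)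
    have norm_lt_one : ‖v 1 / v 0‖ < 1 := by
      rw [norm_div]
      exact (div_lt_one (norm_pos_iff.2 v_zero)).2 hlt
    obtain ⟨x, hx⟩ := (PadicInt.norm_lt_one_iff_dvd ⟨v 1 / v 0, norm_lt_one.le⟩).1 norm_lt_one
    have p_mul_x : (p * x : ℚ_[p]) = v 1 / v 0 := by exact_mod_cast (congrArg Subtype.val hx).symm
    exact .inr ⟨x, mk_eq_mk_of_cross_mul_eq _ _ (by simp [p_mul_x, v_zero])⟩

lemma compl_range_zeroChart : (Set.range (zeroChart (p := p)))ᶜ = Set.range inftyChart := by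
  ext ξ
  refine ⟨(exists_zeroChart_or_inftyChart_eq ξ).resolve_left, ?_⟩
  rintro ⟨y, rfl⟩ ⟨x, hx⟩
  have := pdelta_zeroChart_inftyChart x y
  rw [hx, pdelta_self] at this
  exact zero_ne_one this

lemma mobius_translation_zeroChart (t x : ℤ_[p]) :
    mobius p !![1, t; 0, 1] (zeroChart x) = zeroChart (t + x) := by
  have mulVec_eq :
      !![1, (t : ℚ_[p]); 0, 1].mulVec ![(x : ℚ_[p]), 1] = ![((t + x : ℤ_[p]) : ℚ_[p]), 1] := by
    ext i; fin_cases i <;> simp [Matrix.mulVec, dotProduct, add_comm]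
  simp only [zeroChart, ← mulVec_eq]
  exact mobius_mk _ _

lemma mobius_swap_zeroChart (x : ℤ_[p]) :
    mobius p !![0, 1; 1, 0] (zeroChart (residueMap 0 x)) = inftyChart x := by
  have mulVec_eq :
      !![0, 1; 1, (0 : ℚ_[p])].mulVec ![(residueMap 0 x : ℚ_[p]), 1] = ![1, (p * x : ℚ_[p])] := by
    ext i; fin_cases i <;> simp [residueMap_zero, Matrix.mulVec, dotProduct]
  simp only [inftyChart, ← mulVec_eq]
  exact mobius_mk _ _

section InvariantMeasure

variable {ν : Measure (P1 p)} (μ : Measure ℤ_[p])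

lemma comap_zeroChart [IsFiniteMeasure ν] [μ.IsAddHaarMeasure] [IsProbabilityMeasure μ]
    (hν : IsGLInvariant p ν) :
    ν.comap zeroChart = (ν (Set.range zeroChart)).toNNReal • μ := by
  refine comap_eq_smul_haar μ measurableEmbedding_zeroChart fun t s hs => ?_
  have image_translation : zeroChart '' ((t + ·) '' s)
      = mobius p !![1, t; 0, 1] '' (zeroChart '' s) := by
    rw [Set.image_image, Set.image_image]
    exact Set.image_congr fun x _ => (mobius_translation_zeroChart t x).symm
  rw [image_translation]
  refine hν _ (fun i j => ?_) (by simp) _ (measurableEmbedding_zeroChart.measurableSet_image.2 hs)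
  fin_cases i <;> fin_cases j <;> simp [PadicInt.norm_le_one]

lemma comap_inftyChart (hν : IsGLInvariant p ν) :
    ν.comap inftyChart = (ν.comap zeroChart).comap (residueMap 0) := by
  ext s hs
  have image_residueMap := (measurableEmbedding_residueMap (0 : ZMod p)).measurableSet_image.2 hs
  have image_swap : inftyChart '' s
      = mobius p !![0, 1; 1, 0] '' (zeroChart '' (residueMap 0 '' s)) := by
    simp_rw [Set.image_image, mobius_swap_zeroChart]
  rw [measurableEmbedding_inftyChart.comap_apply,
    (measurableEmbedding_residueMap (0 : ZMod p)).comap_apply,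
    measurableEmbedding_zeroChart.comap_apply, image_swap]
  refine hν _ (fun i j => ?_) (by simp) _
    (measurableEmbedding_zeroChart.measurableSet_image.2 image_residueMap)
  fin_cases i <;> fin_cases j <;> simp

lemma eq_map_comap_add_map_comap :
    ν = (ν.comap zeroChart).map zeroChart + (ν.comap inftyChart).map inftyChart := by
  rw [measurableEmbedding_zeroChart.map_comap, measurableEmbedding_inftyChart.map_comap,
    ← compl_range_zeroChart,
    Measure.restrict_add_restrict_compl measurableEmbedding_zeroChart.measurableSet_range]

lemma eq_smul_map_zeroChart_add_smul_map_inftyChart [IsProbabilityMeasure ν] [μ.IsAddHaarMeasure]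
    [IsProbabilityMeasure μ] (hν : IsGLInvariant p ν) :
    ν = (p / (p + 1) : NNReal) • μ.map zeroChart
      + (p / (p + 1) * (p : NNReal)⁻¹) • μ.map inftyChart := by
  set k := (ν (Set.range zeroChart)).toNNReal with hk
  have decomposition : ν = k • μ.map zeroChart + (k * (p : NNReal)⁻¹) • μ.map inftyChart := by
    conv_lhs => rw [eq_map_comap_add_map_comap (ν := ν), comap_inftyChart hν, comap_zeroChart μ hν]
    have comap_smul : (k • μ).comap (residueMap 0) = k • μ.comap (residueMap 0) :=
      Measure.comap_smul (k : ENNReal)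
    rw [← hk, comap_smul, comap_residueMap, smul_smul, Measure.map_smul, Measure.map_smul]
  have total_mass : k + k * (p : NNReal)⁻¹ = 1 := by
    have mass := measure_univ (μ := ν)
    rw [decomposition, Measure.add_apply, Measure.smul_apply, Measure.smul_apply,
      Measure.map_apply measurableEmbedding_zeroChart.measurable .univ,
      Measure.map_apply measurableEmbedding_inftyChart.measurable .univ, Set.preimage_univ,
      Set.preimage_univ, measure_univ] at mass
    rw [← ENNReal.coe_inj]
    simpa [ENNReal.smul_def] using mass
  have k_eq : k = p / (p + 1) := by
    have : (p : NNReal) ≠ 0 := NeZero.ne _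
    field_simp at total_mass
    rwa [eq_div_iff (by positivity)]
  rwa [k_eq] at decomposition

end InvariantMeasure

end ProjectiveLine

/-! ### The log gas on the projective line -/

section ProjectiveLogGas

variable {p : ℕ} [Fact p.Prime] {β : ℂ}

lemma coulombWeight_zeroChart (x y : ℤ_[p]) :
    coulombWeight (pdelta p) β (zeroChart x) (zeroChart y) = 1 * coulombWeight dist β x y := by
  rw [one_mul, coulombWeight, coulombWeight, pdelta_zeroChart]

lemma coulombWeight_inftyChart (x y : ℤ_[p]) :
    coulombWeight (pdelta p) β (inftyChart x) (inftyChart y) =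
      (p : ℂ) ^ (-β) * coulombWeight dist β x y := by
  rw [← ofReal_inv_natCast_cpow]
  exact coulombWeight_of_eq_mul (pdelta_inftyChart x y) (by positivity) dist_nonneg β

variable (μ : Measure ℤ_[p])

lemma nonInteracting_map_charts (c d : NNReal) :
    NonInteracting (coulombWeight (pdelta p) β) (c • μ.map zeroChart) (d • μ.map inftyChart) :=
  .smul_map measurableEmbedding_zeroChart measurableEmbedding_inftyChart (fun x y =>
    ⟨coulombWeight_of_eq_one (pdelta_zeroChart_inftyChart x y) β,
      coulombWeight_of_eq_one ((pdelta_comm _ _).trans (pdelta_zeroChart_inftyChart x y)) β⟩)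
    μ μ c d

variable {ν : Measure (P1 p)} [IsProbabilityMeasure ν] [μ.IsAddHaarMeasure]
  [IsProbabilityMeasure μ] {n : ℕ}

lemma pairIntegrable_coulombWeight_pdelta (hν : IsGLInvariant p ν) (hβ : -2 / (n : ℝ) < β.re) :
    PairIntegrable (coulombWeight (pdelta p) β) ν n := by
  obtain ⟨μ, _, _⟩ := exists_isAddHaarMeasure_isProbabilityMeasure ℤ_[p]
  rw [eq_smul_map_zeroChart_add_smul_map_inftyChart μ hν]
  exact .add (nonInteracting_map_charts μ _ _)
    (fun k hk => (pairIntegrable_coulombWeight_dist μ hβ hk).smul_map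
      measurableEmbedding_zeroChart coulombWeight_zeroChart _)
    (fun k hk => (pairIntegrable_coulombWeight_dist μ hβ hk).smul_map
      measurableEmbedding_inftyChart coulombWeight_inftyChart _)

lemma coeff_grandPartition_pdelta (hν : IsGLInvariant p ν) (hβ : -2 / (n : ℝ) < β.re) :
    PowerSeries.coeff n (grandPartition (coulombWeight (pdelta p) β) ν) =
      (p / (p + 1) : ℂ) ^ n * PowerSeries.coeff n (grandPartition (coulombWeight dist β) μ *
        cellSeries p ((p : ℂ) ^ (-β)) (grandPartition (coulombWeight dist β) μ)) := by
  set c : NNReal := p / (p + 1) with hc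
  have integrable {k : ℕ} (hk : k ≤ n) := pairIntegrable_coulombWeight_dist μ hβ hk
  have zero_chart : grandPartition (coulombWeight (pdelta p) β) (c • μ.map zeroChart) =
      PowerSeries.rescale (c : ℂ) (grandPartition (coulombWeight dist β) μ) := by
    ext m
    rw [coeff_grandPartition_smul_map measurableEmbedding_zeroChart coulombWeight_zeroChart,
      one_pow, mul_one, PowerSeries.coeff_rescale]
  have infty_chart :
      grandPartition (coulombWeight (pdelta p) β) ((c * (p : NNReal)⁻¹) • μ.map inftyChart) =
        PowerSeries.rescale (c : ℂ)
          (cellSeries p ((p : ℂ) ^ (-β)) (grandPartition (coulombWeight dist β) μ)) := by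
    ext m
    rw [coeff_grandPartition_smul_map measurableEmbedding_inftyChart coulombWeight_inftyChart,
      PowerSeries.coeff_rescale, cellSeries, PowerSeries.coeff_mk]
    push_cast
    ring
  rw [eq_smul_map_zeroChart_add_smul_map_inftyChart μ hν, coeff_grandPartition_add
    (nonInteracting_map_charts μ _ _)
    (fun k hk => (integrable hk).smul_map measurableEmbedding_zeroChart coulombWeight_zeroChart _)
    (fun k hk => (integrable hk).smul_map measurableEmbedding_inftyChart
      coulombWeight_inftyChart _), ← hc, zero_chart, infty_chart, ← map_mul,
    PowerSeries.coeff_rescale, hc]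
  push_cast
  rfl

lemma normalizedCoeff_grandPartition_padicInt (hβ : -2 / (n : ℝ) < β.re) {m : ℕ} (hm : m ≤ n) :
    normalizedCoeff p β (grandPartition (coulombWeight dist β) μ) m = F m (Real.log p) β := by
  have coeff_eq_one {k : ℕ} (hk : k ≤ 1) :
      PowerSeries.coeff k (grandPartition (coulombWeight dist β) μ) = 1 := by
    rw [coeff_grandPartition, partitionFn_of_le_one _ μ hk, Nat.factorial_eq_one.2 hk,
      Nat.cast_one, div_one]
  refine normalizedCoeff_eq_F (Fact.out : p.Prime).two_le (coeff_eq_one zero_le_one)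
    (coeff_eq_one le_rfl) hβ (fun k hk => ?_) hm
  simpa only [ZMod.card] using (selfSimilar_coulombWeight_dist μ β).coeff_grandPartition_eq
    fun l hl => pairIntegrable_coulombWeight_dist μ hβ (hl.trans hk)

lemma partitionFn_coulombWeight_pdelta (hν : IsGLInvariant p ν)
    (hβ : -2 / (n : ℝ) < β.re) (hn : n ≠ 0) :
    partitionFn (coulombWeight (pdelta p) β) ν n =
      n.factorial * ∑ k ∈ Finset.range (n + 1),
        Complex.cosh (Real.log p / 2 * scalingExponent β n * (1 - 2 * k / n)) /
            (2 * Complex.cosh (Real.log p / 2)) ^ n *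
          F (n - k) (Real.log p) β * F k (Real.log p) β := by
  obtain ⟨μ, _, _⟩ := exists_isAddHaarMeasure_isProbabilityMeasure ℤ_[p]
  have hp : p ≠ 0 := NeZero.ne p
  have prefactor : (p / (p + 1) : ℂ) ^ n * (p : ℂ) ^ (-(n / 2) : ℂ) =
      ((2 * Complex.cosh (Real.log p / 2)) ^ n)⁻¹ := by
    rw [← inv_pow, ← div_add_one_mul_cpow_neg_half hp, mul_pow, ← Complex.cpow_nat_mul]
    ring_nf
  have coeff_eq := coeff_grandPartition_pdelta μ hν hβ
  rw [coeff_mul_cellSeries hp, ← mul_assoc, prefactor, coeff_grandPartition, div_eq_iff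
    (Nat.cast_ne_zero.2 n.factorial_ne_zero)] at coeff_eq
  rw [coeff_eq, mul_comm, Finset.mul_sum]
  congr 1
  refine Finset.sum_congr rfl fun k hk => ?_
  have hk := Finset.mem_range_succ_iff.1 hk
  rw [normalizedCoeff_grandPartition_padicInt μ hβ hk,
    normalizedCoeff_grandPartition_padicInt μ hβ (Nat.sub_le n k),
    mul_assoc (Real.log p / 2 : ℂ), scalingExponent_mul_one_sub hk hn]
  ring

end ProjectiveLogGas

theorem statement_3 (p : ℕ) [Fact p.Prime]
    (ν : Measure (P1 p)) [IsProbabilityMeasure ν] (hν : IsGLInvariant p ν)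
    (N : ℕ) (hN : 2 ≤ N) (β : ℂ) (hβ : -2 / (N : ℝ) < β.re) :
    Integrable
      (fun x : Fin N → P1 p => ∏ q ∈ pairs N, ((pdelta p (x q.1) (x q.2) : ℝ) : ℂ) ^ β)
      (Measure.pi fun _ => ν) ∧
    ZP1 p ν N β =
      (N.factorial : ℂ) * ∑ k ∈ Finset.range (N + 1),
        Complex.cosh (((Real.log p : ℂ) / 2) * ((N : ℂ) + (N.choose 2 : ℂ) * β) *
              (1 - 2 * (k : ℂ) / (N : ℂ))) /
            (2 * Complex.cosh ((Real.log p : ℂ) / 2)) ^ N *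
          F (N - k) (Real.log p) β * F k (Real.log p) β := by
  exact ⟨pairIntegrable_coulombWeight_pdelta hν hβ,
    partitionFn_coulombWeight_pdelta hν hβ (by omega)⟩

end LogCoulomb
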